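/- A discrete group G is C*-simple if and only if G has no non-trivial amenable uniformly recurrent subgroup. -/

import Mathlib

noncomputable section
open scoped ENNReal ComplexOrder lp
open MeasureTheory
set_option maxHeartbeats 1000000
set_option synthInstance.maxHeartbeats 1000000

universe u

variable {G : Type u} [Group G]

theorem translat_mem (g : G) (f : ℓ²(G, ℂ)) : Memℓp (fun h => f (g⁻¹ * h)) 2 := by
  have hf : Summable fun i : G => ‖f i‖ ^ (2 : ℝ≥0∞).toReal :=
    (memℓp_gen_iff (by norm_num)).1 (lp.memℓp f)
  exact memℓp_gen ((Equiv.mulLeft g⁻¹).summable_iff.2 hf)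

/-- The left regular representation of `g ∈ G` as a linear isometric bijection of `ℓ²(G)`,
given by `(λ_g ξ)(h) = ξ(g⁻¹ h)`. -/
def lregE (g : G) : ℓ²(G, ℂ) ≃ₗᵢ[ℂ] ℓ²(G, ℂ) :=
{ toFun := fun f => ⟨fun h => f (g⁻¹ * h), translat_mem g f⟩
  invFun := fun f => ⟨fun h => f (g * h), by
    have := translat_mem g⁻¹ f; rw [inv_inv] at this; exact this⟩
  map_add' := by intro f₁ f₂; ext h; simp [lp.coeFn_add]; rfl
  map_smul' := by intro c f; ext h; simp [lp.coeFn_smul]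
  left_inv := by intro f; ext h; simp
  right_inv := by intro f; ext h; simp
  norm_map' := by
    intro f
    rw [lp.norm_eq_tsum_rpow (by norm_num) f, lp.norm_eq_tsum_rpow (by norm_num)]
    congr 1
    exact (Equiv.mulLeft g⁻¹).tsum_eq (fun h => ‖f h‖ ^ (2 : ℝ≥0∞).toReal) }

/-- The left regular representation `λ` as bounded operators on `ℓ²(G)`. -/
def lreg (g : G) : ℓ²(G, ℂ) →L[ℂ] ℓ²(G, ℂ) :=
  (lregE g).toContinuousLinearEquiv.toContinuousLinearMap

variable (G) in
/-- The reduced group C*-algebra `C*_λ(G)`: the norm-closed star subalgebra of the algebra of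
bounded operators on `ℓ²(G)` generated by the image of the left regular representation. -/
def redCstar : StarSubalgebra ℂ (ℓ²(G, ℂ) →L[ℂ] ℓ²(G, ℂ)) :=
  (StarAlgebra.adjoin ℂ (Set.range (lreg (G := G)))).topologicalClosure

variable (G) in
/-- `G` is C*-simple: `C*_λ(G)` has no closed two-sided ideals other than `{0}` and the
whole algebra. -/
def IsCstarSimple : Prop :=
  ∀ I : TwoSidedIdeal (redCstar G), IsClosed (I : Set (redCstar G)) → I = ⊥ ∨ I = ⊤

attribute [irreducible] redCstar lreg lregE

variable (G) in
/-- The Chabauty topology on the space of subgroups of `G`: the topology induced from the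
product topology on `{0,1}^G` by identifying a subgroup with its indicator function. -/
def chabauty : TopologicalSpace (Subgroup G) :=
  letI : ∀ p : Prop, Decidable p := Classical.propDecidable
  TopologicalSpace.induced (fun (H : Subgroup G) (g : G) => decide (g ∈ H))
    (inferInstance : TopologicalSpace (G → Bool))

attribute [instance] chabauty

/-- The conjugate subgroup `gHg⁻¹`. -/
def conjSub (g : G) (H : Subgroup G) : Subgroup G :=
  H.map (MulAut.conj g).toMonoidHom

variable (G) in
/-- A uniformly recurrent subgroup of `G`: a nonempty, Chabauty-closed, conjugation-invariant
and minimal (all orbits are dense) collection of subgroups of `G`. -/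
def IsURS (X : Set (Subgroup G)) : Prop :=
  X.Nonempty ∧ IsClosed X ∧ (∀ (g : G), ∀ H ∈ X, conjSub g H ∈ X) ∧
    ∀ H ∈ X, ∀ K ∈ X, K ∈ closure {L : Subgroup G | ∃ g : G, L = conjSub g H}

/-- Left translation of a bounded function on a group `H`. -/
def translInfty {H : Type*} [Group H] (h : H) (f : lp (fun _ : H => ℝ) ∞) :
    lp (fun _ : H => ℝ) ∞ :=
  ⟨fun k => f (h⁻¹ * k), by
    apply memℓp_infty
    have : (Set.range fun k => ‖f (h⁻¹ * k)‖) = Set.range fun k => ‖f k‖ :=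
      (Equiv.mulLeft h⁻¹).surjective.range_comp (fun k => ‖f k‖)
    rw [this]
    exact memℓp_infty_iff.1 (lp.memℓp f)⟩

/-- A group `H` is amenable: there exists a left-invariant mean on `ℓ∞(H)`, i.e. a unital
positive linear functional invariant under left translation. -/
def IsAmenable (H : Type*) [Group H] : Prop :=
  ∃ m : lp (fun _ : H => ℝ) ∞ →ₗ[ℝ] ℝ,
    m 1 = 1 ∧ (∀ f : lp (fun _ : H => ℝ) ∞, (∀ k, 0 ≤ f k) → 0 ≤ m f) ∧
      ∀ (h : H) (f : lp (fun _ : H => ℝ) ∞), m (translInfty h f) = m f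

/-! ### Bounded functions, states and convolution -/

/-- Bounded real functions. -/
abbrev LInf (Y : Type*) := lp (fun _ : Y => ℝ) ∞

section bounded
variable {Y : Type*}

lemma LInf.abs_le (f : LInf Y) (y : Y) : |f y| ≤ ‖f‖ :=
  lp.norm_apply_le_norm (by simp) f y

lemma LInf.norm_le (f : LInf Y) (C : ℝ) (hC : 0 ≤ C) (h : ∀ y, |f y| ≤ C) : ‖f‖ ≤ C :=
  lp.norm_le_of_forall_le hC h

@[simp] lemma LInf.one_apply (y : Y) : (1 : LInf Y) y = 1 := rfl
lemma LInf.add_apply (f g : LInf Y) (y : Y) : (f + g) y = f y + g y := rfl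
lemma LInf.sub_apply (f g : LInf Y) (y : Y) : (f - g) y = f y - g y := rfl
lemma LInf.smul_apply (c : ℝ) (f : LInf Y) (y : Y) : (c • f) y = c * f y := rfl
lemma LInf.neg_apply (f : LInf Y) (y : Y) : (-f) y = - f y := rfl
lemma LInf.zero_apply (y : Y) : (0 : LInf Y) y = 0 := rfl
@[simp] lemma LInf.mul_apply (f g : LInf Y) (y : Y) : (f * g) y = f y * g y := rfl

open Classical in
/-- A function as a bounded function (junk value `0` when unbounded). -/
def toB (f : Y → ℝ) : LInf Y := if h : Memℓp f ∞ then ⟨f, h⟩ else 0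

lemma toB_apply {f : Y → ℝ} (C : ℝ) (h : ∀ y, |f y| ≤ C) (y : Y) : toB f y = f y := by
  have : Memℓp f ∞ := memℓp_infty ⟨C, by rintro _ ⟨y, rfl⟩; exact h y⟩
  simp [toB, this]

lemma toB_norm_le {f : Y → ℝ} (C : ℝ) (hC : 0 ≤ C) (h : ∀ y, |f y| ≤ C) : ‖toB f‖ ≤ C :=
  LInf.norm_le _ C hC fun y => by rw [toB_apply C h]; exact h y

lemma toB_coe (f : LInf Y) : toB (fun y => f y) = f := by
  ext y; exact toB_apply ‖f‖ (LInf.abs_le f) y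

open Classical in
/-- Indicator function. -/
def ind (A : Set Y) : LInf Y := toB fun y => if y ∈ A then 1 else 0

open Classical in
lemma ind_apply (A : Set Y) (y : Y) : ind A y = if y ∈ A then 1 else 0 :=
  toB_apply 1 (fun y => by split_ifs <;> simp) y

end bounded

/-- Real states on a normed space with unit `e`. -/
structure IsState {V : Type*} [NormedAddCommGroup V] [NormedSpace ℝ V] (e : V) (ψ : V → ℝ) :
    Prop where
  add : ∀ a b, ψ (a + b) = ψ a + ψ b
  smul : ∀ (c : ℝ) a, ψ (c • a) = c * ψ a
  one : ψ e = 1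
  le : ∀ v, ψ v ≤ ‖v‖

namespace IsState
variable {V : Type*} [NormedAddCommGroup V] [NormedSpace ℝ V] {e : V} {ψ : V → ℝ}

lemma zero (h : IsState e ψ) : ψ 0 = 0 := by simpa using h.smul 0 0
lemma neg (h : IsState e ψ) (v : V) : ψ (-v) = - ψ v := by simpa using h.smul (-1) v
lemma sub (h : IsState e ψ) (v w : V) : ψ (v - w) = ψ v - ψ w := by
  rw [sub_eq_add_neg, h.add, h.neg]; ring
lemma abs_le (h : IsState e ψ) (v : V) : |ψ v| ≤ ‖v‖ := by
  rw [_root_.abs_le]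
  have := h.le (-v)
  rw [h.neg, norm_neg] at this
  exact ⟨by linarith, h.le v⟩
lemma sum (h : IsState e ψ) {ι : Type*} (s : Finset ι) (f : ι → V) :
    ψ (∑ i ∈ s, f i) = ∑ i ∈ s, ψ (f i) := by
  classical
  induction s using Finset.induction_on with
  | empty => simp [h.zero]
  | insert a s ha ih => rw [Finset.sum_insert ha, Finset.sum_insert ha, h.add, ih]

end IsState

section isCompact
variable {V : Type*} [NormedAddCommGroup V] [NormedSpace ℝ V] (e : V)

/-- The state space. -/
def St : Set (V → ℝ) := {ψ | IsState e ψ}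

lemma St_isClosed : IsClosed (St e) := by
  have : St e = (⋂ a : V, ⋂ b : V, {ψ : V → ℝ | ψ (a + b) = ψ a + ψ b}) ∩
      ((⋂ c : ℝ, ⋂ a : V, {ψ : V → ℝ | ψ (c • a) = c * ψ a}) ∩ ({ψ : V → ℝ | ψ e = 1} ∩
      (⋂ v : V, {ψ : V → ℝ | ψ v ≤ ‖v‖}))) := by
    ext ψ
    simp only [St, Set.mem_ofPred_eq, Set.mem_inter_iff, Set.mem_iInter]
    exact ⟨fun h => ⟨h.add, h.smul, h.one, h.le⟩, fun h => ⟨h.1, h.2.1, h.2.2.1, h.2.2.2⟩⟩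
  rw [this]
  refine IsClosed.inter (isClosed_iInter fun a => isClosed_iInter fun b =>
    isClosed_eq (by fun_prop) (by fun_prop)) (IsClosed.inter
    (isClosed_iInter fun a => isClosed_iInter fun b =>
    isClosed_eq (by fun_prop) (by fun_prop)) (IsClosed.inter
    (isClosed_eq (by fun_prop) (by fun_prop)) (isClosed_iInter fun a =>
    isClosed_le (by fun_prop) (by fun_prop))))

lemma St_isCompact : IsCompact (St e) := by
  have h : IsCompact (Set.univ.pi fun v : V => Set.Icc (-‖v‖) ‖v‖) :=
    isCompact_univ_pi fun v => isCompact_Icc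
  refine h.of_isClosed_subset (St_isClosed e) ?_
  intro ψ hψ v _
  exact _root_.abs_le.1 (IsState.abs_le hψ v)

lemma St_convex : Convex ℝ (St e) := by
  intro x hx y hy a b ha hb hab
  refine ⟨fun v w => ?_, fun c v => ?_, ?_, fun v => ?_⟩
  · simp [hx.add, hy.add]; ring
  · simp [hx.smul, hy.smul]; ring
  · simp [hx.one, hy.one, hab]
  · have h1 := mul_le_mul_of_nonneg_left (hx.le v) ha
    have h2 := mul_le_mul_of_nonneg_left (hy.le v) hb
    simp only [Pi.add_apply, Pi.smul_apply, smul_eq_mul]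
    calc _ ≤ a * ‖v‖ + b * ‖v‖ := by linarith
      _ = ‖v‖ := by rw [← add_mul, hab, one_mul]

end isCompact

section means
variable {Y : Type*} {m : LInf Y → ℝ}

lemma IsState.nonneg (h : IsState (1 : LInf Y) m) (f : LInf Y) (hf : ∀ y, 0 ≤ f y) : 0 ≤ m f := by
  have h1 : ‖‖f‖ • (1 : LInf Y) - f‖ ≤ ‖f‖ := by
    refine LInf.norm_le _ _ (norm_nonneg _) fun y => ?_
    have h2 := LInf.abs_le f y
    have h3 := hf y
    rw [LInf.sub_apply, LInf.smul_apply, LInf.one_apply, mul_one]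
    rw [abs_of_nonneg h3] at h2
    rw [_root_.abs_le]; constructor <;> linarith
  have h2 := (h.le _).trans h1
  rw [h.sub, h.smul, h.one] at h2
  linarith

lemma IsState.mono (h : IsState (1 : LInf Y) m) (f g : LInf Y) (hf : ∀ y, f y ≤ g y) :
    m f ≤ m g := by
  have := h.nonneg (g - f) (fun y => by
    rw [LInf.sub_apply]; linarith [hf y])
  rw [h.sub] at this; linarith

lemma isState_of_nonneg {Z : Type*} {m : LInf Z → ℝ}
    (add : ∀ a b, m (a + b) = m a + m b)
    (smul : ∀ (c : ℝ) a, m (c • a) = c * m a) (one : m 1 = 1)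
    (nn : ∀ f : LInf Z, (∀ y, 0 ≤ f y) → 0 ≤ m f) : IsState (1 : LInf Z) m := by
  refine ⟨add, smul, one, fun f => ?_⟩
  have h := nn (‖f‖ • (1 : LInf Z) + (-1 : ℝ) • f) (fun y => by
    rw [LInf.add_apply, LInf.smul_apply, LInf.smul_apply, LInf.one_apply]
    have := (_root_.abs_le.1 (LInf.abs_le f y)).2
    linarith)
  rw [add, smul, smul, one] at h
  linarith

/-- Point evaluation. -/
def dirac (y : Y) : LInf Y → ℝ := fun f => f y

lemma dirac_isState (y : Y) : IsState (1 : LInf Y) (dirac y) :=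
  ⟨fun a b => rfl, fun c a => rfl, rfl, fun f => (le_abs_self _).trans (LInf.abs_le f y)⟩

end means

/-- A normed space with an isometric action of `G` and an invariant unit. -/
structure GMod (G V : Type*) [Group G] [NormedAddCommGroup V] [NormedSpace ℝ V] where
  act : G → V →ₗ[ℝ] V
  act_one : ∀ v, act 1 v = v
  act_mul : ∀ g h v, act (g * h) v = act g (act h v)
  norm_act : ∀ g v, ‖act g v‖ ≤ ‖v‖
  e : V
  norm_e : ‖e‖ ≤ 1
  act_e : ∀ g, act g e = e

/-- Translation on bounded functions. -/
def LMod (G Y : Type*) [Group G] [MulAction G Y] : GMod G (LInf Y) where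
  act g :=
    { toFun := fun f => toB fun y => f (g⁻¹ • y)
      map_add' := fun a b => by
        ext y
        rw [LInf.add_apply, toB_apply ‖a + b‖ (fun y => LInf.abs_le _ _),
          toB_apply ‖a‖ (fun y => LInf.abs_le _ _), toB_apply ‖b‖ (fun y => LInf.abs_le _ _)]
        rfl
      map_smul' := fun c a => by
        ext y
        rw [RingHom.id_apply, LInf.smul_apply, toB_apply ‖c • a‖ (fun y => LInf.abs_le _ _),
          toB_apply ‖a‖ (fun y => LInf.abs_le _ _)]
        rfl }
  act_one v := by
    simp only [LinearMap.coe_mk, AddHom.coe_mk, inv_one, one_smul]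
    exact toB_coe v
  act_mul g h v := by
    ext y
    simp only [LinearMap.coe_mk, AddHom.coe_mk]
    rw [toB_apply ‖v‖ (fun y => LInf.abs_le _ _),
      toB_apply ‖v‖ (fun y => by
        rw [toB_apply ‖v‖ (fun y => LInf.abs_le _ _)]; exact LInf.abs_le _ _),
      toB_apply ‖v‖ (fun y => LInf.abs_le _ _)]
    rw [mul_inv_rev, mul_smul]
  norm_act g v := toB_norm_le _ (norm_nonneg _) fun y => LInf.abs_le _ _
  e := 1
  norm_e := LInf.norm_le _ _ zero_le_one fun y => by simp
  act_e g := by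
    ext y
    exact toB_apply 1 (fun y => by simp) y

lemma LMod_act_apply {Y : Type*} [MulAction G Y] (g : G) (f : LInf Y) (y : Y) :
    (LMod G Y).act g f y = f (g⁻¹ • y) :=
  toB_apply ‖f‖ (fun y => LInf.abs_le _ _) y

@[simp] lemma LMod_e {Y : Type*} [MulAction G Y] : (LMod G Y).e = 1 := rfl

/-- Abbreviation: means on `G`. -/
abbrev Mean (m : LInf G → ℝ) : Prop := IsState (1 : LInf G) m

namespace GMod
variable {V : Type*} [NormedAddCommGroup V] [NormedSpace ℝ V] (α : GMod G V)

/-- Convolution of a mean and a state. -/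
def conv (m : LInf G → ℝ) (ψ : V → ℝ) : V → ℝ := fun v => m (toB fun g => ψ (α.act g⁻¹ v))

/-- Translation of a state. -/
def sh (g : G) (ψ : V → ℝ) : V → ℝ := fun v => ψ (α.act g⁻¹ v)

variable {α} {m n : LInf G → ℝ} {ψ : V → ℝ}

lemma bdd (hψ : IsState α.e ψ) (v : V) (g : G) : |ψ (α.act g v)| ≤ ‖v‖ :=
  (hψ.abs_le _).trans (α.norm_act _ _)

lemma conv_toB (hψ : IsState α.e ψ) (v : V) (g : G) :
    toB (fun g => ψ (α.act g⁻¹ v)) g = ψ (α.act g⁻¹ v) :=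
  toB_apply ‖v‖ (fun g => bdd hψ v g⁻¹) g

lemma conv_isState (hm : Mean m) (hψ : IsState α.e ψ) : IsState α.e (α.conv m ψ) := by
  refine ⟨fun a b => ?_, fun c a => ?_, ?_, fun v => ?_⟩
  · simp only [conv]
    rw [← hm.add]; congr 1; ext g
    rw [LInf.add_apply, conv_toB hψ, conv_toB hψ, conv_toB hψ, map_add, hψ.add]
  · simp only [conv]
    rw [← hm.smul]; congr 1; ext g
    rw [LInf.smul_apply, conv_toB hψ, conv_toB hψ, map_smul, hψ.smul]
  · simp only [conv]
    rw [← hm.one]; congr 1; ext g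
    rw [conv_toB hψ, α.act_e, hψ.one]; rfl
  · exact (hm.le _).trans (toB_norm_le _ (norm_nonneg _) fun g => bdd hψ v g⁻¹)

lemma sh_isState (hψ : IsState α.e ψ) (g : G) : IsState α.e (α.sh g ψ) :=
  ⟨fun a b => by simp [sh, hψ.add], fun c a => by simp [sh, hψ.smul],
    by simp [sh, α.act_e, hψ.one], fun v => (hψ.le _).trans (α.norm_act _ _)⟩

lemma conv_dirac (hψ : IsState α.e ψ) (g : G) : α.conv (dirac g) ψ = α.sh g ψ := by
  funext v
  exact conv_toB hψ v g

lemma sh_mul (g h : G) (ψ : V → ℝ) : α.sh (g * h) ψ = α.sh g (α.sh h ψ) := by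
  funext v; simp [sh, α.act_mul]

lemma sh_one (ψ : V → ℝ) : α.sh 1 ψ = ψ := by
  funext v; simp [sh, α.act_one]

lemma conv_assoc (hn : Mean n) (hψ : IsState α.e ψ) :
    α.conv ((LMod G G).conv m n) ψ = α.conv m (α.conv n ψ) := by
  funext v
  simp only [conv]
  congr 1; congr 1; funext g; congr 1
  ext h
  rw [LMod_act_apply, conv_toB hψ, conv_toB hψ, ← α.act_mul]
  simp

/-- Convolution intertwines equivariant pull-backs. -/
lemma conv_comp {W : Type*} [NormedAddCommGroup W] [NormedSpace ℝ W] {β : GMod G W}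
    (T : W → V) (hT : ∀ g w, T (β.act g w) = α.act g (T w)) (m : LInf G → ℝ) (ψ : V → ℝ) :
    β.conv m (ψ ∘ T) = α.conv m ψ ∘ T := by
  funext w
  simp [conv, hT]

lemma sh_comp {W : Type*} [NormedAddCommGroup W] [NormedSpace ℝ W] {β : GMod G W}
    (T : W → V) (hT : ∀ g w, T (β.act g w) = α.act g (T w)) (g : G) (ψ : V → ℝ) :
    β.sh g (ψ ∘ T) = α.sh g ψ ∘ T := by
  funext w
  simp [sh, hT]

end GMod

lemma IsState.comp {V W : Type*} [NormedAddCommGroup V] [NormedSpace ℝ V]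
    [NormedAddCommGroup W] [NormedSpace ℝ W] {e : V} {e' : W} {ψ : V → ℝ} (h : IsState e ψ)
    (T : W →ₗ[ℝ] V) (hT : ∀ w, ‖T w‖ ≤ ‖w‖) (he : T e' = e) : IsState e' (ψ ∘ T) :=
  ⟨fun a b => by simp [h.add], fun c a => by simp [h.smul], by simp [he, h.one],
    fun v => (h.le _).trans (hT v)⟩


/-! ### Minimal left ideals of means -/

lemma exists_minimal_inv {X ι : Type*} [TopologicalSpace X] (T : ι → X → X) (C : Set X)
    (hC : IsCompact C) (hcl : IsClosed C) (hne : C.Nonempty)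
    (hinv : ∀ i, ∀ x ∈ C, T i x ∈ C) :
    ∃ M ⊆ C, IsClosed M ∧ M.Nonempty ∧ (∀ i, ∀ x ∈ M, T i x ∈ M) ∧
      ∀ N ⊆ M, IsClosed N → N.Nonempty → (∀ i, ∀ x ∈ N, T i x ∈ N) → N = M := by
  let S : Set (Set X) := {M | M ⊆ C ∧ IsClosed M ∧ M.Nonempty ∧ ∀ i, ∀ x ∈ M, T i x ∈ M}
  obtain ⟨M, hMC, hM⟩ := zorn_superset_nonempty S (by
    intro c hcS hch hcne
    refine ⟨⋂₀ c, ⟨?_, ?_, ?_, ?_⟩, fun s hs => Set.sInter_subset_of_mem hs⟩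
    · obtain ⟨s, hs⟩ := hcne
      exact (Set.sInter_subset_of_mem hs).trans (hcS hs).1
    · exact isClosed_sInter fun s hs => (hcS hs).2.1
    · haveI := hcne.to_subtype
      refine IsCompact.nonempty_sInter_of_directed_nonempty_isCompact_isClosed ?_ ?_ ?_ ?_
      · intro a ha b hb
        rcases hch.total ha hb with h | h
        · exact ⟨a, ha, subset_rfl, h⟩
        · exact ⟨b, hb, h, subset_rfl⟩
      · exact fun s hs => (hcS hs).2.2.1
      · exact fun s hs => hC.of_isClosed_subset (hcS hs).2.1 (hcS hs).1
      · exact fun s hs => (hcS hs).2.1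
    · intro i x hx s hs
      exact (hcS hs).2.2.2 i x (hx s hs)) C ⟨subset_rfl, hcl, hne, hinv⟩
  refine ⟨M, hMC, hM.prop.2.1, hM.prop.2.2.1, hM.prop.2.2.2, fun N hN h1 h2 h3 => ?_⟩
  exact hM.eq_of_subset ⟨hN.trans hMC, h1, h2, h3⟩ hN

/-- A minimal left ideal in the semigroup of means. -/
structure IsMinL (L : Set (LInf G → ℝ)) : Prop where
  mean : ∀ x ∈ L, Mean x
  compact : IsCompact L
  nonempty : L.Nonempty
  ideal : ∀ m, Mean m → ∀ x ∈ L, (LMod G G).conv m x ∈ L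
  zero : ∀ x ∈ L, ∀ y ∈ L, (LMod G G).conv x y = x

/-- Right convolution as a linear map. -/
def rconv (y : LInf G → ℝ) : (LInf G → ℝ) →ₗ[ℝ] (LInf G → ℝ) where
  toFun m := (LMod G G).conv m y
  map_add' _ _ := rfl
  map_smul' _ _ := rfl

lemma rconv_continuous (y : LInf G → ℝ) : Continuous (rconv y) :=
  continuous_pi fun f => continuous_apply (toB fun g => y ((LMod G G).act g⁻¹ f))

lemma rconv_fixed {L : Set (LInf G → ℝ)} (hm : ∀ x ∈ L, Mean x) (hc : IsCompact L)
    (hconv : Convex ℝ L) (hne : L.Nonempty) (y : LInf G → ℝ) (hy : ∀ x ∈ L, rconv y x ∈ L) :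
    ∃ z ∈ L, rconv y z = z := by
  obtain ⟨z0, hz0⟩ := hne
  have hpow : ∀ k : ℕ, (rconv y ^ k) z0 ∈ L := by
    intro k
    induction k with
    | zero => simpa using hz0
    | succ k ih => rw [pow_succ']; exact hy _ ih
  let z : ℕ → (LInf G → ℝ) := fun n =>
    ((n + 1 : ℝ)⁻¹) • ∑ k ∈ Finset.range (n + 1), (rconv y ^ k) z0
  have hz : ∀ n, z n ∈ L := by
    intro n
    simp only [z, Finset.smul_sum]
    refine hconv.sum_mem (fun i _ => by positivity) ?_ (fun i _ => hpow i)
    simp only [Finset.sum_const, Finset.card_range, nsmul_eq_mul]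
    push_cast
    field_simp
  have hdiff : ∀ n f, |rconv y (z n) f - z n f| ≤ (n + 1 : ℝ)⁻¹ * (2 * ‖f‖) := by
    intro n f
    have h1 : rconv y (z n) - z n = ((n + 1 : ℝ)⁻¹) • ((rconv y ^ (n+1)) z0 - z0) := by
      simp only [z, map_smul, map_sum, ← smul_sub]
      congr 1
      have : ∀ k, rconv y ((rconv y ^ k) z0) = (rconv y ^ (k+1)) z0 := by
        intro k; rw [pow_succ']; rfl
      simp only [this]
      rw [Finset.sum_range_succ, Finset.sum_range_succ' (fun k => (rconv y ^ k) z0)]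
      simp
    have h2 : rconv y (z n) f - z n f = (n + 1 : ℝ)⁻¹ * ((rconv y ^ (n+1)) z0 f - z0 f) :=
      congrFun h1 f
    rw [h2, abs_mul, abs_of_nonneg (by positivity)]
    refine mul_le_mul_of_nonneg_left ?_ (by positivity)
    have h3 := (hm _ (hpow (n+1))).abs_le f
    have h4 := (hm _ hz0).abs_le f
    exact (abs_sub _ _).trans (by linarith)
  let U : Ultrafilter ℕ := Filter.hyperfilter ℕ
  obtain ⟨w, hw, hlim⟩ := hc.ultrafilter_le_nhds (U.map z) (by
    rw [Filter.le_principal_iff]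
    exact Filter.mem_map.2 (Filter.univ_mem' hz))
  have hlim' : Filter.Tendsto z U (nhds w) := hlim
  refine ⟨w, hw, ?_⟩
  funext f
  have t1 : Filter.Tendsto (fun n => rconv y (z n) f - z n f) U (nhds (rconv y w f - w f)) :=
    ((tendsto_pi_nhds.1 (((rconv_continuous y).tendsto w).comp hlim')) f).sub
      ((tendsto_pi_nhds.1 hlim') f)
  have t2 : Filter.Tendsto (fun n : ℕ => (n + 1 : ℝ)⁻¹ * (2 * ‖f‖)) U (nhds 0) := by
    have h0 : Filter.Tendsto (fun n : ℕ => (n + 1 : ℝ)⁻¹ * (2 * ‖f‖)) Filter.atTop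
        (nhds (0 * (2 * ‖f‖))) := by
      refine Filter.Tendsto.mul_const _ ?_
      simpa [one_div] using (tendsto_one_div_add_atTop_nhds_zero_nat (𝕜 := ℝ))
    rw [zero_mul] at h0
    exact h0.mono_left (Nat.hyperfilter_le_atTop)
  have t3 := squeeze_zero_norm (f := fun n => rconv y (z n) f - z n f) (fun n => hdiff n f) t2
  have := tendsto_nhds_unique t1 t3
  linarith

theorem exists_isMinL (ψ : LInf G → ℝ) (hψ : Mean ψ) :
    ∃ L : Set (LInf G → ℝ), IsMinL L ∧ ∀ x ∈ L, ∃ m, Mean m ∧ x = (LMod G G).conv m ψ := by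
  have himg : ∀ x, IsCompact ((rconv x) '' St (1 : LInf G)) := fun x =>
    (St_isCompact _).image (rconv_continuous x)
  have hinv : ∀ x, Mean x → ∀ (i : {m : LInf G → ℝ // Mean m}),
      ∀ y ∈ (rconv x) '' St (1 : LInf G), (LMod G G).conv i.1 y ∈ (rconv x) '' St (1 : LInf G) := by
    rintro x hx i _ ⟨n, hn, rfl⟩
    refine ⟨(LMod G G).conv i.1 n, GMod.conv_isState (α := LMod G G) i.2 hn, ?_⟩
    exact GMod.conv_assoc (α := LMod G G) hn hx
  have hne : ∀ x : LInf G → ℝ, ((rconv x) '' St (1 : LInf G)).Nonempty := fun x =>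
    ⟨_, dirac 1, dirac_isState 1, rfl⟩
  obtain ⟨L, hLC, hcl, hLne, hLinv, hLmin⟩ := exists_minimal_inv
    (fun (i : {m : LInf G → ℝ // Mean m}) x => (LMod G G).conv i.1 x)
    ((rconv ψ) '' St (1 : LInf G)) (himg ψ) (himg ψ).isClosed (hne ψ) (hinv ψ hψ)
  have hmean : ∀ x ∈ L, Mean x := by
    intro x hx
    obtain ⟨m, hm, rfl⟩ := hLC hx
    exact GMod.conv_isState (α := LMod G G) hm hψ
  have hLc : IsCompact L := (himg ψ).of_isClosed_subset hcl hLC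
  have hgen : ∀ x ∈ L, (rconv x) '' St (1 : LInf G) = L := by
    intro x hx
    refine hLmin _ ?_ (himg x).isClosed (hne x) (hinv x (hmean x hx))
    rintro _ ⟨m, hm, rfl⟩
    exact hLinv ⟨m, hm⟩ x hx
  have hconv : Convex ℝ L := by
    obtain ⟨x, hx⟩ := hLne
    rw [← hgen x hx]
    exact (St_convex _).linear_image _
  refine ⟨L, ⟨hmean, hLc, hLne, fun m hm x hx => hLinv ⟨m, hm⟩ x hx, ?_⟩, ?_⟩
  · intro x hx y hy
    obtain ⟨z, hz, hzy⟩ := rconv_fixed hmean hLc hconv hLne y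
      (fun x hx => hLinv ⟨x, hmean x hx⟩ y hy)
    rw [← hgen z hz] at hx
    obtain ⟨m, hm, rfl⟩ := hx
    calc _ = (LMod G G).conv m ((LMod G G).conv z y) :=
          GMod.conv_assoc (α := LMod G G) (hmean z hz) (hmean y hy)
      _ = _ := by
          have : (LMod G G).conv z y = z := hzy
          rw [this]; rfl
  · intro x hx
    obtain ⟨m, hm, rfl⟩ := hLC hx
    exact ⟨m, hm, rfl⟩

/-! ### Extreme points -/

section ext
variable {Y : Type*} {ν : LInf Y → ℝ}

lemma ind_add_compl (A : Set Y) : ind A + ind Aᶜ = 1 := by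
  ext y
  rw [LInf.add_apply, ind_apply, ind_apply]
  by_cases h : y ∈ A <;> simp [h]

lemma IsState.ind_nonneg (hν : IsState (1 : LInf Y) ν) (A : Set Y) : 0 ≤ ν (ind A) :=
  hν.nonneg _ fun y => by rw [ind_apply]; split_ifs <;> simp

lemma IsState.ind_compl (hν : IsState (1 : LInf Y) ν) (A : Set Y) :
    ν (ind A) + ν (ind Aᶜ) = 1 := by
  rw [← hν.add, ind_add_compl, hν.one]

lemma IsState.split (hν : IsState (1 : LInf Y) ν) (A : Set Y) (F : LInf Y) :
    ν F = ν (ind A * F) + ν (ind Aᶜ * F) := by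
  rw [← hν.add, ← add_mul, ind_add_compl, one_mul]

lemma IsState.null (hν : IsState (1 : LInf Y) ν) (A : Set Y) (hA : ν (ind A) = 0) (F : LInf Y) :
    ν (ind A * F) = 0 := by
  have h1 : ν (ind A * F) ≤ ν (‖F‖ • ind A) := hν.mono _ _ fun y => by
    rw [LInf.mul_apply, LInf.smul_apply, ind_apply]
    have := (_root_.abs_le.1 (LInf.abs_le F y)).2
    split_ifs <;> simp [this]
  have h2 : ν ((-‖F‖) • ind A) ≤ ν (ind A * F) := hν.mono _ _ fun y => by
    rw [LInf.mul_apply, LInf.smul_apply, ind_apply]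
    have := (_root_.abs_le.1 (LInf.abs_le F y)).1
    split_ifs <;> simp [this]
  rw [hν.smul, hA] at h1 h2
  linarith

lemma IsState.restr (hν : IsState (1 : LInf Y) ν) (A : Set Y) (hA : 0 < ν (ind A)) :
    IsState (1 : LInf Y) (fun F => (ν (ind A))⁻¹ * ν (ind A * F)) := by
  refine isState_of_nonneg (fun a b => ?_) (fun c a => ?_) ?_ fun f hf => ?_
  · rw [mul_add, hν.add]; ring
  · rw [mul_smul_comm, hν.smul]; ring
  · rw [mul_one]; exact inv_mul_cancel₀ hA.ne'
  · refine mul_nonneg (by positivity) (hν.nonneg _ fun y => ?_)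
    rw [LInf.mul_apply, ind_apply]
    split_ifs <;> simp [hf y]

lemma ae_const {L : Set (LInf G → ℝ)} (Θ : LInf G →ₗ[ℝ] LInf Y)
    (hΘ : ∀ ν, IsState (1 : LInf Y) ν → ν ∘ Θ ∈ L) (hν : IsState (1 : LInf Y) ν)
    {x : LInf G → ℝ} (hx : x ∈ L.extremePoints ℝ) (hνx : ν ∘ Θ = x) (A : Set Y)
    (hA : 0 < ν (ind A)) (h : LInf G) : ν (ind A * Θ h) = ν (ind A) * x h := by
  have hs := hν.ind_compl A
  rcases eq_or_lt_of_le (hν.ind_nonneg Aᶜ) with h0 | h0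
  · have h1 : ν (ind A) = 1 := by linarith
    rw [h1, one_mul, ← hνx, Function.comp_apply, hν.split A (Θ h), hν.null Aᶜ h0.symm, add_zero]
  · have key := (mem_extremePoints.1 hx).2 _ (hΘ _ (hν.restr A hA)) _ (hΘ _ (hν.restr Aᶜ h0))
      ⟨ν (ind A), ν (ind Aᶜ), hA, h0, hs, by
        rw [← hνx]
        funext f
        simp only [Pi.add_apply, Pi.smul_apply, Function.comp_apply, smul_eq_mul]
        rw [hν.split A (Θ f)]
        field_simp⟩
    have := congrFun key.1 h
    simp only [Function.comp_apply] at this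
    rw [← this]
    field_simp

lemma null_of_lt {L : Set (LInf G → ℝ)} (Θ : LInf G →ₗ[ℝ] LInf Y)
    (hΘ : ∀ ν, IsState (1 : LInf Y) ν → ν ∘ Θ ∈ L) (hν : IsState (1 : LInf Y) ν)
    {x : LInf G → ℝ} (hx : x ∈ L.extremePoints ℝ) (hνx : ν ∘ Θ = x) (A : Set Y)
    (h : LInf G) (c : ℝ) (hc : x h < c) (hA : ∀ y ∈ A, c ≤ Θ h y) : ν (ind A) = 0 := by
  rcases eq_or_lt_of_le (hν.ind_nonneg A) with h0 | h0
  · exact h0.symm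
  exfalso
  have h1 := ae_const Θ hΘ hν hx hνx A h0 h
  have h2 : ν (c • ind A) ≤ ν (ind A * Θ h) := hν.mono _ _ fun y => by
    rw [LInf.mul_apply, LInf.smul_apply, ind_apply]
    split_ifs with hy
    · simpa using hA y hy
    · simp
  rw [h1, hν.smul] at h2
  nlinarith

lemma null_of_zero {L : Set (LInf G → ℝ)} (Θ : LInf G →ₗ[ℝ] LInf Y)
    (hΘ : ∀ ν, IsState (1 : LInf Y) ν → ν ∘ Θ ∈ L) (hν : IsState (1 : LInf Y) ν)
    {x : LInf G → ℝ} (hx : x ∈ L.extremePoints ℝ) (hνx : ν ∘ Θ = x) (A : Set Y)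
    (h : LInf G) (hc : x h ≠ 0) (hA : ∀ y ∈ A, Θ h y = 0) : ν (ind A) = 0 := by
  rcases eq_or_lt_of_le (hν.ind_nonneg A) with h0 | h0
  · exact h0.symm
  exfalso
  have h1 := ae_const Θ hΘ hν hx hνx A h0 h
  have h2 : ind A * Θ h = 0 := by
    ext y
    rw [LInf.mul_apply, ind_apply, LInf.zero_apply]
    split_ifs with hy
    · simpa using hA y hy
    · simp
  rw [h2, hν.zero] at h1
  rcases mul_eq_zero.1 h1.symm with h3 | h3
  · exact h0.ne' h3
  · exact hc h3

/-- The Poisson-type map. -/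
def Theta (x : LInf G → ℝ) (hx : Mean x) (σ : Y → G) : LInf G →ₗ[ℝ] LInf Y where
  toFun f := toB fun y => x ((LMod G G).act (σ y)⁻¹ f)
  map_add' a b := by
    ext y
    rw [LInf.add_apply, toB_apply ‖a + b‖ (fun y => GMod.bdd (α := LMod G G) hx _ _),
      toB_apply ‖a‖ (fun y => GMod.bdd (α := LMod G G) hx _ _),
      toB_apply ‖b‖ (fun y => GMod.bdd (α := LMod G G) hx _ _), map_add, hx.add]
  map_smul' c a := by
    ext y
    rw [RingHom.id_apply, LInf.smul_apply,
      toB_apply ‖c • a‖ (fun y => GMod.bdd (α := LMod G G) hx _ _),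
      toB_apply ‖a‖ (fun y => GMod.bdd (α := LMod G G) hx _ _), map_smul, hx.smul]

lemma Theta_apply (x : LInf G → ℝ) (hx : Mean x) (σ : Y → G) (f : LInf G) (y : Y) :
    Theta x hx σ f y = (LMod G G).sh (σ y) x f :=
  toB_apply ‖f‖ (fun y => GMod.bdd (α := LMod G G) hx _ _) y

/-- Composition with `σ`. -/
def pull (σ : Y → G) : LInf G →ₗ[ℝ] LInf Y where
  toFun f := toB fun y => f (σ y)
  map_add' a b := by
    ext y
    rw [LInf.add_apply, toB_apply ‖a + b‖ (fun y => LInf.abs_le _ _),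
      toB_apply ‖a‖ (fun y => LInf.abs_le _ _), toB_apply ‖b‖ (fun y => LInf.abs_le _ _),
      LInf.add_apply]
  map_smul' c a := by
    ext y
    rw [RingHom.id_apply, LInf.smul_apply, toB_apply ‖c • a‖ (fun y => LInf.abs_le _ _),
      toB_apply ‖a‖ (fun y => LInf.abs_le _ _), LInf.smul_apply]

lemma pull_apply (σ : Y → G) (f : LInf G) (y : Y) : pull σ f y = f (σ y) :=
  toB_apply ‖f‖ (fun y => LInf.abs_le _ _) y

lemma pull_isState (σ : Y → G) (hν : IsState (1 : LInf Y) ν) : Mean (ν ∘ pull σ) :=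
  hν.comp (pull σ) (fun f => toB_norm_le _ (norm_nonneg _) fun y => LInf.abs_le _ _)
    (by ext y; rw [pull_apply]; rfl)

lemma Theta_comp (x : LInf G → ℝ) (hx : Mean x) (σ : Y → G) (ν : LInf Y → ℝ) :
    ν ∘ Theta x hx σ = (LMod G G).conv (ν ∘ pull σ) x := by
  funext f
  simp only [Function.comp_apply, GMod.conv]
  congr 1
  ext y
  rw [Theta_apply, pull_apply, GMod.conv_toB (α := LMod G G) hx]
  rfl

lemma IsMinL.Theta_mem {L : Set (LInf G → ℝ)} (hL : IsMinL L) {x : LInf G → ℝ} (hx : x ∈ L)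
    (σ : Y → G) (ν : LInf Y → ℝ) (hν : IsState (1 : LInf Y) ν) :
    ν ∘ Theta x (hL.mean x hx) σ ∈ L := by
  rw [Theta_comp]
  exact hL.ideal _ (pull_isState σ hν) x hx

lemma IsMinL.sh_mem {L : Set (LInf G → ℝ)} (hL : IsMinL L) {x : LInf G → ℝ} (hx : x ∈ L)
    (g : G) : (LMod G G).sh g x ∈ L := by
  rw [← GMod.conv_dirac (α := LMod G G) (hL.mean x hx)]
  exact hL.ideal _ (dirac_isState g) x hx

lemma IsMinL.sh_ext {L : Set (LInf G → ℝ)} (hL : IsMinL L) {x : LInf G → ℝ}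
    (hx : x ∈ L.extremePoints ℝ) (g : G) : (LMod G G).sh g x ∈ L.extremePoints ℝ := by
  rw [mem_extremePoints] at hx ⊢
  refine ⟨hL.sh_mem hx.1 g, fun x1 h1 x2 h2 hseg => ?_⟩
  obtain ⟨a, b, ha, hb, hab, hxx⟩ := hseg
  have hback : ∀ z, (LMod G G).sh g ((LMod G G).sh g⁻¹ z) = z := fun z => by
    rw [← GMod.sh_mul, mul_inv_cancel, GMod.sh_one]
  have := hx.2 _ (hL.sh_mem h1 g⁻¹) _ (hL.sh_mem h2 g⁻¹) ⟨a, b, ha, hb, hab, by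
    have h3 : (LMod G G).sh g⁻¹ (a • x1 + b • x2) = x := by
      rw [hxx, ← GMod.sh_mul, inv_mul_cancel, GMod.sh_one]
    exact h3⟩
  exact ⟨by rw [← this.1, hback], by rw [← this.2, hback]⟩

theorem IsMinL.singular {L : Set (LInf G → ℝ)} (hL : IsMinL L) {x y : LInf G → ℝ}
    (hx : x ∈ L.extremePoints ℝ) (hy : y ∈ L.extremePoints ℝ) (hxy : x ≠ y) :
    ∃ A : Set G, x (ind A) = 0 ∧ y (ind Aᶜ) = 0 := by
  obtain ⟨h, hh⟩ : ∃ h, x h < y h := by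
    by_contra! hcon
    apply hxy
    funext h
    have h1 := hcon h
    have h2 := hcon (-h)
    rw [(hL.mean x hx.1).neg, (hL.mean y hy.1).neg] at h2
    linarith
  let Θ := Theta x (hL.mean x hx.1) (id : G → G)
  have hΘ := hL.Theta_mem hx.1 (id : G → G)
  have hfix : ∀ z ∈ L, z ∘ Θ = z := by
    intro z hz
    rw [Theta_comp]
    have : z ∘ pull (id : G → G) = z := by
      funext f
      simp only [Function.comp_apply]
      congr 1
      ext g; rw [pull_apply]; rfl
    rw [this, hL.zero z hz x hx.1]
  refine ⟨{g | (x h + y h) / 2 ≤ Θ h g}, ?_, ?_⟩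
  · exact null_of_lt Θ hΘ (hL.mean x hx.1) hx (hfix x hx.1) _ h ((x h + y h) / 2) (by linarith)
      (fun g hg => hg)
  · refine null_of_lt Θ hΘ (hL.mean y hy.1) hy (hfix y hy.1) _ (-h) (-((x h + y h) / 2)) ?_ ?_
    · rw [(hL.mean y hy.1).neg]; linarith
    · intro g hg
      rw [map_neg, LInf.neg_apply]
      have : ¬ ((x h + y h) / 2 ≤ Θ h g) := hg
      linarith

end ext


/-! ### Operators -/

/-- Bounded operators on `ℓ²(Y)`. -/
abbrev Op (Y : Type*) := ℓ²(Y, ℂ) →L[ℂ] ℓ²(Y, ℂ)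

section operators
variable {Y : Type*}

lemma l2_summable (ξ : ℓ²(Y, ℂ)) : Summable fun y => ‖ξ y‖ ^ 2 := by
  have := (memℓp_gen_iff (p := 2) (by norm_num)).1 (lp.memℓp ξ)
  simpa using this

lemma l2_mem {f : Y → ℂ} (h : Summable fun y => ‖f y‖ ^ 2) : Memℓp f 2 :=
  memℓp_gen (by simpa using h)

lemma l2_norm_sq (ξ : ℓ²(Y, ℂ)) : ‖ξ‖ ^ 2 = ∑' y, ‖ξ y‖ ^ 2 := by
  have := lp.norm_rpow_eq_tsum (p := 2) (by norm_num) ξ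
  simpa using this

/-- Unitary permutation operators. -/
def permI [MulAction G Y] (g : G) : ℓ²(Y, ℂ) →ₗᵢ[ℂ] ℓ²(Y, ℂ) where
  toFun f := ⟨fun y => f (g⁻¹ • y), l2_mem ((MulAction.toPerm g⁻¹).summable_iff.2 (l2_summable f))⟩
  map_add' a b := by ext y; rfl
  map_smul' c a := by ext y; rfl
  norm_map' f := by
    have : ∀ ξ η : ℓ²(Y, ℂ), ‖ξ‖ ^ 2 = ‖η‖ ^ 2 → ‖ξ‖ = ‖η‖ := fun ξ η h => by
      rwa [sq_eq_sq₀ (norm_nonneg _) (norm_nonneg _)] at h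
    refine this _ _ ?_
    rw [l2_norm_sq, l2_norm_sq]
    exact (MulAction.toPerm g⁻¹).tsum_eq (fun y => ‖f y‖ ^ 2)

/-- Unitary permutation operators. -/
def perm [MulAction G Y] (g : G) : Op Y := (permI g).toContinuousLinearMap

@[simp] lemma perm_apply [MulAction G Y] (g : G) (ξ : ℓ²(Y, ℂ)) (y : Y) :
    perm g ξ y = ξ (g⁻¹ • y) := rfl

lemma perm_norm_le [MulAction G Y] (g : G) : ‖(perm g : Op Y)‖ ≤ 1 :=
  (permI g).norm_toContinuousLinearMap_le

lemma perm_one [MulAction G Y] : (perm (1 : G) : Op Y) = 1 := by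
  ext ξ y; simp

lemma perm_mul [MulAction G Y] (g h : G) : (perm (g * h) : Op Y) = perm g * perm h := by
  ext ξ y; simp [mul_smul]

lemma perm_star [MulAction G Y] (g : G) : star (perm g : Op Y) = perm g⁻¹ := by
  rw [ContinuousLinearMap.star_eq_adjoint]
  symm
  rw [ContinuousLinearMap.eq_adjoint_iff]
  intro ξ η
  rw [lp.inner_eq_tsum, lp.inner_eq_tsum]
  rw [← (MulAction.toPerm g⁻¹).tsum_eq]
  congr 1; funext y
  simp

lemma lreg_eq_perm (g : G) : lreg g = (perm g : Op G) := by
  ext ξ y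
  unfold lreg lregE
  rfl

lemma mulMem (f : LInf Y) (ξ : ℓ²(Y, ℂ)) : Summable fun y => ‖(f y : ℂ) * ξ y‖ ^ 2 := by
  refine Summable.of_nonneg_of_le (fun y => by positivity) (fun y => ?_)
    ((l2_summable ξ).mul_left (‖f‖ ^ 2))
  rw [norm_mul, mul_pow]
  gcongr
  rw [Complex.norm_real]; exact LInf.abs_le f y

lemma mulBound (f : LInf Y) (ξ : ℓ²(Y, ℂ)) :
    ‖(⟨fun y => (f y : ℂ) * ξ y, l2_mem (mulMem f ξ)⟩ : ℓ²(Y, ℂ))‖ ≤ ‖f‖ * ‖ξ‖ := by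
  refine (sq_le_sq₀ (norm_nonneg _) (by positivity)).1 ?_
  rw [mul_pow, l2_norm_sq, l2_norm_sq, ← tsum_mul_left]
  refine Summable.tsum_le_tsum (fun y => ?_) (mulMem f ξ) ((l2_summable ξ).mul_left _)
  change ‖(f y : ℂ) * ξ y‖ ^ 2 ≤ _
  rw [norm_mul, mul_pow]
  gcongr
  rw [Complex.norm_real]; exact LInf.abs_le f y

/-- Multiplication operators. -/
def mulOp : LInf Y →ₗ[ℝ] Op Y where
  toFun f := LinearMap.mkContinuous
    { toFun := fun ξ => ⟨fun y => (f y : ℂ) * ξ y, l2_mem (mulMem f ξ)⟩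
      map_add' := fun a b => by ext y; exact mul_add _ _ _
      map_smul' := fun c a => by ext y; exact mul_left_comm _ _ _ } ‖f‖ (fun ξ => mulBound f ξ)
  map_add' a b := by
    ext ξ y
    change ((a + b) y : ℂ) * ξ y = a y * ξ y + b y * ξ y
    rw [LInf.add_apply]; push_cast; ring
  map_smul' c a := by
    ext ξ y
    change ((c • a) y : ℂ) * ξ y = c • (a y * ξ y)
    rw [LInf.smul_apply]; push_cast; rw [Complex.real_smul]; ring

@[simp] lemma mulOp_apply (f : LInf Y) (ξ : ℓ²(Y, ℂ)) (y : Y) :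
    mulOp f ξ y = f y * ξ y := rfl

lemma mulOp_norm_le (f : LInf Y) : ‖mulOp f‖ ≤ ‖f‖ :=
  LinearMap.mkContinuous_norm_le _ (norm_nonneg _) (fun ξ => mulBound f ξ)

lemma mulOp_one : mulOp (1 : LInf Y) = 1 := by
  ext ξ y; simp

lemma mulOp_mul (f g : LInf Y) : mulOp (f * g) = mulOp f * mulOp g := by
  ext ξ y; simp [mul_assoc]

lemma mulOp_star (f : LInf Y) : star (mulOp f) = mulOp f := by
  rw [ContinuousLinearMap.star_eq_adjoint]
  symm
  rw [ContinuousLinearMap.eq_adjoint_iff]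
  intro ξ η
  rw [lp.inner_eq_tsum, lp.inner_eq_tsum]
  congr 1; funext y
  simp; ring

lemma ind_mul_self (A : Set Y) : ind A * ind A = ind A := by
  ext y; rw [LInf.mul_apply, ind_apply]; split_ifs <;> simp

lemma perm_mulOp [MulAction G Y] (g : G) (f : LInf Y) :
    perm g * mulOp f * perm g⁻¹ = mulOp ((LMod G Y).act g f) := by
  ext ξ y; simp [LMod_act_apply]

variable (G Y) in
/-- Conjugation action on operators. -/
def OMod [MulAction G Y] : GMod G (Op Y) where
  act g :=
    { toFun := fun T => perm g * T * perm g⁻¹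
      map_add' := fun a b => by rw [mul_add, add_mul]
      map_smul' := fun c a => by simp }
  act_one v := by simp [perm_one]
  act_mul g h v := by simp [perm_mul, mul_assoc]
  norm_act g v := by
    change ‖perm g * v * perm g⁻¹‖ ≤ _
    refine (norm_mul_le _ _).trans ((mul_le_mul (norm_mul_le _ _) (perm_norm_le _) (norm_nonneg _) (by positivity)).trans ?_)
    have := mul_le_mul_of_nonneg_right (perm_norm_le (Y := Y) g) (norm_nonneg v)
    linarith
  e := 1
  norm_e := ContinuousLinearMap.norm_id_le
  act_e g := by
    change perm g * 1 * perm g⁻¹ = _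
    rw [mul_one, ← perm_mul]; simp [perm_one]

lemma OMod_act [MulAction G Y] (g : G) (T : Op Y) :
    (OMod G Y).act g T = perm g * T * perm g⁻¹ := rfl

@[simp] lemma OMod_e [MulAction G Y] : (OMod G Y).e = 1 := rfl

lemma OMod_perm [MulAction G Y] (g s : G) (z : ℂ) :
    (OMod G Y).act g (z • perm s) = z • perm (g * s * g⁻¹) := by
  rw [OMod_act, perm_mul, perm_mul]; simp

lemma IsState.mulOp {ρ : Op Y → ℝ} (h : IsState (1 : Op Y) ρ) :
    IsState (1 : LInf Y) (ρ ∘ mulOp) := h.comp _ mulOp_norm_le mulOp_one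

end operators

/-! ### Null projections, killing group elements, Hahn-Banach -/

section nullproj
variable {Y : Type*}

lemma real_zero_of_forall {r C : ℝ} (hC : 0 ≤ C) (h : ∀ t : ℝ, (1 + t * r) ^ 2 ≤ 1 + t ^ 2 * C) :
    r = 0 := by
  have h1 := h (r / (C + 1))
  have hC1 : 0 < C + 1 := by linarith
  have e1 : (r / (C + 1)) * (C + 1) = r := by field_simp
  set t := r / (C + 1)
  have h2 : 2 * t ^ 2 * (C + 1) ≤ t ^ 2 * C := by
    rw [← e1] at h1; nlinarith [sq_nonneg (t * (t * (C + 1)))]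
  have h3 : t ^ 2 ≤ 0 := by
    have : 0 ≤ t ^ 2 := sq_nonneg t
    nlinarith [mul_nonneg this hC, mul_nonneg this (sq_nonneg (C+1))]
  have h4 : t = 0 := by nlinarith [sq_nonneg t, pow_eq_zero_iff (two_ne_zero) (a := t)]
  rw [← e1, h4, zero_mul]

lemma null_left {ρ : Op Y → ℝ} (hρ : IsState (1 : Op Y) ρ) (p : Op Y) (hpp : p * p = p)
    (hs : star p = p) (h1 : ‖p‖ ≤ 1) (h2 : ‖1 - p‖ ≤ 1) (h0 : ρ p = 0) (T : Op Y) :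
    ρ (p * T) = 0 := by
  refine real_zero_of_forall (C := ‖T‖ ^ 2) (by positivity) fun t => ?_
  set a : Op Y := (1 - p) + (t : ℂ) • (p * T) with ha
  have e1 : ρ a = 1 + t * ρ (p * T) := by
    rw [ha, hρ.add, hρ.sub, hρ.one, h0, ← hρ.smul, sub_zero]; rfl
  have e2 : star a * a = (1 - p) + ((t : ℂ) * t) • (star T * p * T) := by
    have q1 : p * (p * T) = p * T := by rw [← mul_assoc, hpp]
    simp only [ha, star_add, star_sub, star_one, hs, star_smul, star_mul, add_mul, mul_add,
      sub_mul, mul_sub, one_mul, mul_one, hpp, smul_mul_assoc, mul_smul_comm, mul_assoc, q1]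
    simp [mul_smul]
  have e3 : ‖a‖ ^ 2 ≤ 1 + t ^ 2 * ‖T‖ ^ 2 := by
    rw [sq, ← CStarRing.norm_star_mul_self, e2]
    refine (norm_add_le _ _).trans (add_le_add h2 ?_)
    rw [norm_smul]
    have : ‖star T * p * T‖ ≤ ‖T‖ ^ 2 := by
      refine (norm_mul_le _ _).trans ?_
      have := (norm_mul_le (star T) p).trans
        (mul_le_mul_of_nonneg_left h1 (norm_nonneg _))
      have hn : ‖star T‖ = ‖T‖ := norm_star T
      rw [mul_one] at this
      rw [sq]
      exact mul_le_mul_of_nonneg_right (this.trans hn.le) (norm_nonneg _)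
    have h4 : ‖(t : ℂ) * t‖ = t ^ 2 := by
      rw [norm_mul, Complex.norm_real, Real.norm_eq_abs, ← sq, sq_abs]
    rw [h4]; gcongr
  rw [← e1]
  refine le_trans ?_ e3
  rw [← sq_abs]
  exact pow_le_pow_left₀ (abs_nonneg _) (hρ.abs_le a) 2

lemma null_right {ρ : Op Y → ℝ} (hρ : IsState (1 : Op Y) ρ) (p : Op Y) (hpp : p * p = p)
    (hs : star p = p) (h1 : ‖p‖ ≤ 1) (h2 : ‖1 - p‖ ≤ 1) (h0 : ρ p = 0) (T : Op Y) :
    ρ (T * p) = 0 := by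
  have hst : IsState (1 : Op Y) (fun T => ρ (star T)) :=
    ⟨fun a b => by rw [star_add, hρ.add], fun c a => by
      rw [← hρ.smul]; congr 1
      change star ((c : ℂ) • a) = (c : ℂ) • star a
      rw [star_smul]; simp, by
      rw [star_one, hρ.one], fun v => by
      rw [← norm_star v]; exact hρ.le _⟩
  have := null_left hst p hpp hs h1 h2 (by simp only [hs, h0]) (star T)
  simpa [hs] using this

lemma ind_norm_le (A : Set Y) : ‖ind A‖ ≤ 1 :=
  LInf.norm_le _ _ zero_le_one fun y => by rw [ind_apply]; split_ifs <;> simp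

lemma one_sub_mulOp_ind (A : Set Y) : 1 - mulOp (ind A) = mulOp (ind Aᶜ) := by
  rw [← mulOp_one, ← ind_add_compl A, map_add]; abel

lemma null_mul_ind {ρ : Op Y → ℝ} (hρ : IsState (1 : Op Y) ρ) (A : Set Y)
    (h0 : ρ (mulOp (ind A)) = 0) (T : Op Y) :
    ρ (mulOp (ind A) * T) = 0 ∧ ρ (T * mulOp (ind A)) = 0 := by
  have a1 : mulOp (ind A) * mulOp (ind A) = mulOp (ind A) := by rw [← mulOp_mul, ind_mul_self]
  have a2 : ‖mulOp (ind A)‖ ≤ 1 := (mulOp_norm_le _).trans (ind_norm_le _)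
  have a3 : ‖1 - mulOp (ind A)‖ ≤ 1 := by
    rw [one_sub_mulOp_ind]; exact (mulOp_norm_le _).trans (ind_norm_le _)
  exact ⟨null_left hρ _ a1 (mulOp_star _) a2 a3 h0 T, null_right hρ _ a1 (mulOp_star _) a2 a3 h0 T⟩

lemma act_ind [MulAction G Y] (s : G) (A : Set Y) :
    (LMod G Y).act s (ind A) = ind {y | s⁻¹ • y ∈ A} := by
  ext y; rw [LMod_act_apply, ind_apply, ind_apply]; rfl

lemma kill_perm [MulAction G Y] {ρ : Op Y → ℝ} (hρ : IsState (1 : Op Y) ρ) (s : G) (A : Set Y)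
    (h0 : ρ (mulOp (ind A)) = 0) (h1 : ρ (mulOp ((LMod G Y).act s (ind Aᶜ))) = 0) (z : ℂ) :
    ρ (z • perm s) = 0 := by
  have e : z • (perm s : Op Y) = (z • perm s) * mulOp (ind A) +
      mulOp ((LMod G Y).act s (ind Aᶜ)) * (z • perm s) := by
    rw [← perm_mulOp, ← one_sub_mulOp_ind]
    have : (perm s⁻¹ : Op Y) * perm s = 1 := by rw [← perm_mul]; simp [perm_one]
    simp only [mul_assoc, mul_smul_comm, smul_mul_assoc, this, mul_sub, mul_one, ← smul_add]
    congr 1; abel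
  rw [e, hρ.add, (null_mul_ind hρ A h0 _).2]
  rw [act_ind] at h1 ⊢
  rw [(null_mul_ind hρ _ h1 _).1, zero_add]

lemma IsMinL.kill {L : Set (LInf G → ℝ)} (hL : IsMinL L) {x : LInf G → ℝ}
    (hx : x ∈ L.extremePoints ℝ) {ρ : Op G → ℝ} (hρ : IsState (1 : Op G) ρ)
    (hρx : ρ ∘ mulOp = x) (s : G) (hs : (LMod G G).sh s x ≠ x) (z : ℂ) :
    ρ (z • perm s) = 0 := by
  have hs' : x ≠ (LMod G G).sh s⁻¹ x := by
    intro h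
    apply hs
    nth_rw 1 [h]
    rw [← GMod.sh_mul, mul_inv_cancel, GMod.sh_one]
  obtain ⟨A, hA, hA'⟩ := hL.singular hx (hL.sh_ext hx s⁻¹) hs'
  refine kill_perm hρ s A ?_ ?_ z
  · rw [← hA, ← hρx]; rfl
  · rw [← hA', ← hρx]; simp [GMod.sh]

end nullproj

lemma exists_state_zero {V : Type*} [NormedAddCommGroup V] [NormedSpace ℝ V] (e : V)
    (W : Submodule ℝ V) (hW : ∀ w ∈ W, 1 ≤ ‖e - w‖) :
    ∃ ρ : V → ℝ, IsState e ρ ∧ ∀ w ∈ W, ρ w = 0 := by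
  obtain ⟨f, u, hf, hu⟩ := geometric_hahn_banach_open (s := Metric.ball e 1) (t := (W : Set V))
    (convex_ball e 1) Metric.isOpen_ball W.convex (by
      rw [Set.disjoint_left]
      intro w hw hw'
      have := hW w hw'
      rw [Metric.mem_ball, dist_comm, dist_eq_norm] at hw
      linarith)
  have hu0 : u ≤ 0 := by simpa using hu 0 W.zero_mem
  have hW0 : ∀ w ∈ W, f w = 0 := by
    intro w hw
    by_contra hne
    have := hu (((u - 1) / f w) • w) (W.smul_mem _ hw)
    rw [map_smul, smul_eq_mul, div_mul_cancel₀ _ hne] at this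
    linarith
  have hfe : f e < 0 := (hf e (Metric.mem_ball_self one_pos)).trans_le hu0
  have hv : ∀ v, ‖v‖ < 1 → f v < - f e := by
    intro v hv
    have := hf (e + v) (by simpa using hv)
    rw [map_add] at this; linarith
  refine ⟨fun v => f v / f e, ⟨fun a b => ?_, fun c a => ?_, div_self hfe.ne, fun v => ?_⟩,
    fun w hw => ?_⟩
  · simp [add_div]
  · simp [mul_div_assoc]
  · refine le_of_forall_gt_imp_ge_of_dense fun c hc => ?_
    have hc0 : 0 < c := (norm_nonneg v).trans_lt hc
    have := hv (-(c⁻¹ • v)) (by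
      rw [norm_neg, norm_smul, norm_inv, Real.norm_of_nonneg hc0.le, inv_mul_lt_iff₀ hc0]; linarith)
    rw [map_neg, map_smul, smul_eq_mul, neg_lt_neg_iff] at this
    rw [div_le_iff_of_neg hfe]
    rw [lt_inv_mul_iff₀ hc0] at this
    exact this.le
  · simp [hW0 w hw]

/-! ### Amenability and the Chabauty space -/

/-- Relative amenability of a subgroup, via a mean on the big group. -/
def AmenIn (K : Subgroup G) : Prop := ∃ m : LInf G → ℝ, Mean m ∧ ∀ k ∈ K, (LMod G G).sh k m = m

lemma AmenIn.isAmenable {K : Subgroup G} (h : AmenIn K) : IsAmenable K := by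
  obtain ⟨m, hm, hK⟩ := h
  have hκ : ∀ g : G, g * Quotient.out ((g⁻¹ : G) : G ⧸ K) ∈ K := fun g => by
    obtain ⟨k, hk⟩ := QuotientGroup.mk_out_eq_mul K g⁻¹
    rw [hk]; simp
  let κ : G → K := fun g => ⟨_, hκ g⟩
  have hκ' : ∀ (k : K) (g : G), κ (k * g) = k * κ g := fun k g => by
    apply Subtype.ext
    change (k * g : G) * _ = k * (g * _)
    have : (((k * g : G)⁻¹ : G) : G ⧸ K) = ((g⁻¹ : G) : G ⧸ K) := by
      rw [QuotientGroup.eq]; simp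
    rw [this, mul_assoc]
  have hp := pull_isState (G := K) κ hm
  refine ⟨{ toFun := m ∘ pull (G := K) κ, map_add' := hp.add, map_smul' := hp.smul }, hp.one,
    hp.nonneg, fun k f => ?_⟩
  change m (pull κ (translInfty k f)) = m (pull κ f)
  have e : pull κ (translInfty k f) = (LMod G G).act (k : G) (pull κ f) := by
    ext g
    rw [pull_apply, LMod_act_apply, pull_apply]
    change f (k⁻¹ * κ g) = f (κ ((k : G)⁻¹ * g))
    rw [← hκ']; rfl
  rw [e]
  have := congrFun (hK _ (K.inv_mem k.2)) (pull κ f)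
  simpa [GMod.sh] using this

lemma mem_conjSub {g h : G} {K : Subgroup G} : h ∈ conjSub g K ↔ g⁻¹ * h * g ∈ K := by
  unfold conjSub
  constructor
  · rintro ⟨k, hk, rfl⟩
    simpa [mul_assoc] using hk
  · intro hk
    exact ⟨_, hk, by simp [mul_assoc]⟩

lemma AmenIn.conj {K : Subgroup G} (h : AmenIn K) (g : G) : AmenIn (conjSub g K) := by
  obtain ⟨m, hm, hK⟩ := h
  refine ⟨(LMod G G).sh g m, GMod.sh_isState (α := LMod G G) hm g, fun k hk => ?_⟩
  have := hK _ (mem_conjSub.1 hk)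
  rw [← GMod.sh_mul]
  nth_rw 2 [← this]
  rw [← GMod.sh_mul]; simp [mul_assoc]

lemma isClopen_mem (g : G) : IsClopen {K : Subgroup G | g ∈ K} := by
  classical
  have hc : Continuous (fun K : Subgroup G => decide (g ∈ K)) := by
    have h1 : Continuous (fun (H : Subgroup G) (g : G) => decide (g ∈ H)) := by
      convert continuous_induced_dom
      unfold chabauty
      congr 1
    exact (continuous_apply g).comp h1
  have := (isClopen_discrete ({true} : Set Bool)).preimage hc
  convert this using 1
  ext K; simp

lemma continuous_to_sub {X : Type*} [TopologicalSpace X] (f : X → Subgroup G)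
    (h : ∀ g, IsClopen {x | g ∈ f x}) : Continuous f := by
  refine continuous_induced_rng.2 (continuous_pi fun g => ?_)
  rw [continuous_discrete_rng]
  intro b
  cases b
  · convert (h g).compl.isOpen using 1
    ext x; simp
  · convert (h g).isOpen using 1
    ext x; simp

lemma continuous_conjSub (g : G) : Continuous (conjSub g) :=
  continuous_to_sub _ fun h => by
    simp only [mem_conjSub]
    exact isClopen_mem _

instance chab_compact : CompactSpace (Subgroup G) := by
  classical
  let χ : Subgroup G → G → Bool := fun H g => decide (g ∈ H)
  have hi : Topology.IsInducing χ := by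
    constructor
    unfold chabauty
    congr 1
  have hinj : Function.Injective χ := by
    intro H K h
    ext g
    have := congrFun h g
    simpa [χ] using this
  have hr : IsClosed (Set.range χ) := by
    have : Set.range χ = {f | f 1 = true} ∩ ((⋂ a, ⋂ b, {f | f a = true → f b = true → f (a * b) = true})
        ∩ ⋂ a, {f | f a = true → f a⁻¹ = true}) := by
      ext f
      simp only [Set.mem_range, Set.mem_inter_iff, Set.mem_iInter, Set.mem_ofPred_eq]
      constructor
      · rintro ⟨H, rfl⟩
        simp only [χ, decide_eq_true_eq]
        exact ⟨H.one_mem, fun a b => H.mul_mem, fun a => H.inv_mem⟩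
      · rintro ⟨h1, h2, h3⟩
        refine ⟨{ carrier := {g | f g = true}, one_mem' := h1, mul_mem' := h2 _ _,
                  inv_mem' := h3 _ }, ?_⟩
        funext g
        simp [χ]
    rw [this]
    refine IsClosed.inter ?_ (IsClosed.inter ?_ ?_)
    · exact isClosed_eq (by fun_prop) (by fun_prop)
    · refine isClosed_iInter fun a => isClosed_iInter fun b => ?_
      exact (isClosed_discrete {p : Bool × Bool × Bool | p.1 = true → p.2.1 = true → p.2.2 = true}).preimage
        (f := fun f : G → Bool => (f a, f b, f (a * b))) (by fun_prop)
    · refine isClosed_iInter fun a => ?_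
      exact (isClosed_discrete {p : Bool × Bool | p.1 = true → p.2 = true}).preimage
        (f := fun f : G → Bool => (f a, f a⁻¹)) (by fun_prop)
  exact (Topology.IsClosedEmbedding.mk ⟨hi, hinj⟩ hr).compactSpace

lemma isClosed_amenIn : IsClosed {K : Subgroup G | AmenIn K} := by
  refine isClosed_of_closure_subset fun K hK => ?_
  have key : ((St (1 : LInf G)) ∩ ⋂ k : K, {m | (LMod G G).sh (k : G) m = m}).Nonempty := by
    refine (St_isCompact (1 : LInf G)).inter_iInter_nonempty _ (fun k => ?_) fun S => ?_
    · have : {m | (LMod G G).sh (k : G) m = m} =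
        ⋂ f : LInf G, {m : LInf G → ℝ | m ((LMod G G).act (k : G)⁻¹ f) = m f} := by
        ext m
        simp only [Set.mem_ofPred_eq, Set.mem_iInter]
        exact ⟨fun h f => congrFun h f, fun h => funext h⟩
      rw [this]
      exact isClosed_iInter fun f => isClosed_eq (by fun_prop) (by fun_prop)
    · have ho : IsOpen (⋂ k ∈ S, {L : Subgroup G | (k : G) ∈ L}) :=
        isOpen_biInter_finset fun k _ => (isClopen_mem _).isOpen
      obtain ⟨L, hL, m, hm, hmL⟩ := mem_closure_iff.1 hK _ ho (by simp)
      simp only [Set.mem_iInter, Set.mem_ofPred_eq] at hL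
      refine ⟨m, hm, ?_⟩
      simp only [Set.mem_iInter, Set.mem_ofPred_eq]
      exact fun k hk => hmL _ (hL k hk)
  obtain ⟨m, hm, hK⟩ := key
  simp only [Set.mem_iInter, Set.mem_ofPred_eq] at hK
  exact ⟨m, hm, fun k hk => hK ⟨k, hk⟩⟩

/-- Stabilizer of a mean. -/
def stab (x : LInf G → ℝ) : Subgroup G where
  carrier := {k | (LMod G G).sh k x = x}
  one_mem' := GMod.sh_one _
  mul_mem' := fun {a b} ha hb => by
    change (LMod G G).sh (a * b) x = x
    rw [GMod.sh_mul]
    rw [show (LMod G G).sh b x = x from hb]; exact ha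
  inv_mem' := fun {a} ha => by
    change (LMod G G).sh a⁻¹ x = x
    nth_rw 1 [← show (LMod G G).sh a x = x from ha]
    rw [← GMod.sh_mul, inv_mul_cancel, GMod.sh_one]

lemma mem_stab {x : LInf G → ℝ} {k : G} : k ∈ stab x ↔ (LMod G G).sh k x = x := Iff.rfl

lemma stab_amenIn {x : LInf G → ℝ} (hx : Mean x) : AmenIn (stab x) := ⟨x, hx, fun _ h => h⟩

lemma stab_sh (x : LInf G → ℝ) (g : G) : stab ((LMod G G).sh g x) = conjSub g (stab x) := by
  ext k
  rw [mem_conjSub, mem_stab, mem_stab, GMod.sh_mul, GMod.sh_mul]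
  constructor
  · intro h
    rw [h, ← GMod.sh_mul, inv_mul_cancel, GMod.sh_one]
  · intro h
    nth_rw 2 [← h]
    rw [← GMod.sh_mul (g := g), mul_inv_cancel, GMod.sh_one]

lemma conjSub_mul (g h : G) (K : Subgroup G) : conjSub (g * h) K = conjSub g (conjSub h K) := by
  ext k
  simp [mem_conjSub, mul_assoc]

lemma conjSub_one (K : Subgroup G) : conjSub 1 K = K := by
  ext k
  simp [mem_conjSub]

lemma closure_orbit_inv (H : Subgroup G) (g : G) :
    ∀ K ∈ closure {L : Subgroup G | ∃ g : G, L = conjSub g H},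
      conjSub g K ∈ closure {L : Subgroup G | ∃ g : G, L = conjSub g H} := by
  intro K hK
  refine map_mem_closure (continuous_conjSub g) hK ?_
  rintro _ ⟨h, rfl⟩
  exact ⟨g * h, (conjSub_mul _ _ _).symm⟩

theorem free_of_no_urs (hno : ¬ ∃ X : Set (Subgroup G), IsURS G X ∧ (∀ H ∈ X, IsAmenable H) ∧
        X ≠ {(⊥ : Subgroup G)}) {x : LInf G → ℝ} (hx : Mean x) (F : Finset G) (hF : 1 ∉ F) :
    ∃ g : G, ∀ s ∈ F, (LMod G G).sh s ((LMod G G).sh g x) ≠ (LMod G G).sh g x := by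
  by_contra! hcon
  apply hno
  set O := {L : Subgroup G | ∃ g : G, L = conjSub g (stab x)} with hO
  have hC : closure O ⊆ {K | AmenIn K} ∩ ⋃ s ∈ F, {K | s ∈ K} := by
    refine closure_minimal ?_ (isClosed_amenIn.inter
      (F.finite_toSet.isClosed_biUnion fun s _ => (isClopen_mem s).isClosed))
    rintro _ ⟨g, rfl⟩
    refine ⟨(stab_amenIn hx).conj g, ?_⟩
    obtain ⟨s, hs, h⟩ := hcon g
    simp only [Set.mem_iUnion]
    refine ⟨s, hs, ?_⟩
    change s ∈ conjSub g (stab x)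
    rw [← stab_sh]; exact h
  obtain ⟨M, hMC, hMcl, hMne, hMinv, hMmin⟩ := exists_minimal_inv (conjSub (G := G)) (closure O)
    isClosed_closure.isCompact isClosed_closure ⟨_, subset_closure ⟨1, rfl⟩⟩
    (fun g K hK => closure_orbit_inv _ g K hK)
  refine ⟨M, ⟨hMne, hMcl, hMinv, fun H hH K hK => ?_⟩, fun H hH => (hC (hMC hH)).1.isAmenable, ?_⟩
  · rw [hMmin (closure {L | ∃ g, L = conjSub g H}) ?_ isClosed_closure
      ⟨_, subset_closure ⟨1, rfl⟩⟩ (fun g K hK => closure_orbit_inv _ g K hK)]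
    · exact hK
    · refine closure_minimal ?_ hMcl
      rintro _ ⟨g, rfl⟩
      exact hMinv g H hH
  · rintro rfl
    have := (hC (hMC rfl)).2
    simp only [Set.mem_iUnion] at this
    obtain ⟨s, hs, h⟩ := this
    have h' : s = 1 := Subgroup.mem_bot.1 h
    exact hF (h' ▸ hs)

/-! ### The group algebra -/

section groupAlgebra
variable {Y : Type*}

open Classical in
/-- Basis vector. -/
def del (y : Y) : ℓ²(Y, ℂ) := lp.single 2 y (1 : ℂ)

open Classical in
lemma del_apply (y z : Y) : del y z = if z = y then 1 else 0 := by
  unfold del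
  by_cases h : z = y
  · subst h; simp
  · rw [lp.single_apply_ne _ _ _ h, if_neg h]

lemma del_self (y : Y) : del y y = 1 := by rw [del_apply, if_pos rfl]

lemma norm_del (y : Y) : ‖del y‖ = 1 := by
  classical
  unfold del
  rw [lp.norm_single (by norm_num)]; simp

lemma norm_coord_le (ξ : ℓ²(Y, ℂ)) (y : Y) : ‖ξ y‖ ≤ ‖ξ‖ :=
  lp.norm_apply_le_norm (by norm_num) ξ y

lemma coord_eq_inner (ξ : ℓ²(Y, ℂ)) (y : Y) : ξ y = inner ℂ (del y) ξ := by
  classical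
  unfold del
  rw [lp.inner_single_left]; simp

lemma perm_del [MulAction G Y] (g : G) (y : Y) : perm g (del y) = del (g • y) := by
  ext z
  rw [perm_apply, del_apply, del_apply]
  by_cases h : z = g • y
  · rw [if_pos h, if_pos (inv_smul_eq_iff.2 h)]
  · rw [if_neg h, if_neg (mt inv_smul_eq_iff.1 h)]

variable (G Y) in
/-- The permutation representation as a homomorphism. -/
def permHom [MulAction G Y] : G →* Op Y where
  toFun := perm
  map_one' := perm_one
  map_mul' := perm_mul

variable (G Y) in
/-- The permutation representation of the group algebra. -/
def repn [MulAction G Y] : MonoidAlgebra ℂ G →ₐ[ℂ] Op Y := MonoidAlgebra.lift ℂ (Op Y) G (permHom G Y)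

lemma repn_single [MulAction G Y] (s : G) (z : ℂ) :
    repn G Y (MonoidAlgebra.single s z) = z • perm s := MonoidAlgebra.lift_single _ _ _

lemma repn_sum [MulAction G Y] (c : MonoidAlgebra ℂ G) :
    repn G Y c = ∑ s ∈ c.coeff.support, c.coeff s • perm s := MonoidAlgebra.lift_apply _ _

lemma adjoin_exists {A : Type*} [Ring A] [StarRing A] [Algebra ℂ A] [StarModule ℂ A]
    (u : G →* A) (hu : ∀ g, star (u g) = u g⁻¹) {a : A}
    (ha : a ∈ StarAlgebra.adjoin ℂ (Set.range u)) :
    ∃ c : MonoidAlgebra ℂ G, MonoidAlgebra.lift ℂ A G u c = a := by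
  induction ha using StarAlgebra.adjoin_induction with
  | mem x h =>
    obtain ⟨g, rfl⟩ := h
    exact ⟨MonoidAlgebra.single g 1, by simp⟩
  | algebraMap r => exact ⟨algebraMap _ _ r, AlgHom.commutes _ _⟩
  | add x y _ _ h1 h2 =>
    obtain ⟨c, rfl⟩ := h1
    obtain ⟨d, rfl⟩ := h2
    exact ⟨c + d, map_add _ _ _⟩
  | mul x y _ _ h1 h2 =>
    obtain ⟨c, rfl⟩ := h1
    obtain ⟨d, rfl⟩ := h2
    exact ⟨c * d, map_mul _ _ _⟩
  | star x _ h1 =>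
    obtain ⟨c, rfl⟩ := h1
    clear * - hu
    induction c using MonoidAlgebra.induction_linear with
    | zero => exact ⟨0, by simp⟩
    | add x y h1 h2 =>
      obtain ⟨c, hc⟩ := h1
      obtain ⟨d, hd⟩ := h2
      exact ⟨c + d, by rw [map_add, map_add, star_add, hc, hd]⟩
    | single m r => exact ⟨MonoidAlgebra.single m⁻¹ (star r), by simp [hu]⟩

lemma repn_trace (c : MonoidAlgebra ℂ G) : (repn G G c (del 1)) 1 = c.coeff 1 := by
  classical
  induction c using MonoidAlgebra.induction_linear with
  | zero => simp
  | add x y h1 h2 =>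
    rw [map_add]
    simp [h1, h2]
  | single m r =>
    rw [repn_single]
    change r * (perm m (del 1)) 1 = _
    rw [perm_del, del_apply]
    by_cases h : m = 1
    · simp [h]
    · simp [Ne.symm h]

lemma coeff_one_le (c : MonoidAlgebra ℂ G) : ‖c.coeff 1‖ ≤ ‖repn G G c‖ := by
  rw [← repn_trace]
  refine (norm_coord_le _ _).trans ?_
  have := (repn G G c).le_opNorm (del 1)
  rwa [norm_del, mul_one] at this

open Classical in
lemma state_repn [MulAction G Y] {ρ : Op Y → ℝ} (hρ : IsState (1 : Op Y) ρ) (c : MonoidAlgebra ℂ G)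
    (h : ∀ s ∈ c.coeff.support.erase 1, ∀ z : ℂ, ρ (z • perm s) = 0) :
    ρ (repn G Y c) = ρ (c.coeff 1 • 1) := by
  rw [repn_sum, hρ.sum]
  by_cases h1 : (1 : G) ∈ c.coeff.support
  · rw [← Finset.add_sum_erase _ _ h1, Finset.sum_eq_zero fun s hs => h s hs _, add_zero, perm_one]
  · rw [Finsupp.notMem_support_iff.1 h1, zero_smul, hρ.zero]
    exact Finset.sum_eq_zero fun s hs => h s (by
      rw [Finset.mem_erase]; refine ⟨?_, hs⟩; rintro rfl; exact h1 hs) _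

lemma redCstar_isClosed : IsClosed (redCstar G : Set (Op G)) := by
  rw [redCstar, StarSubalgebra.topologicalClosure_coe]
  exact isClosed_closure

lemma range_lreg : Set.range (lreg (G := G)) = Set.range (permHom G G) := by
  congr 1; funext g; exact lreg_eq_perm g

lemma perm_mem_redCstar (g : G) : (perm g : Op G) ∈ redCstar G := by
  rw [redCstar]
  apply StarSubalgebra.le_topologicalClosure
  apply StarAlgebra.subset_adjoin
  exact ⟨g, lreg_eq_perm g⟩

lemma redCstar_approx {a : Op G} (ha : a ∈ redCstar G) {ε : ℝ} (hε : 0 < ε) :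
    ∃ c : MonoidAlgebra ℂ G, ‖a - repn G G c‖ < ε := by
  rw [redCstar, ← SetLike.mem_coe, StarSubalgebra.topologicalClosure_coe, Metric.mem_closure_iff] at ha
  obtain ⟨b, hb, hab⟩ := ha ε hε
  rw [range_lreg] at hb
  obtain ⟨c, rfl⟩ := adjoin_exists (permHom G G) (fun g => perm_star g) hb
  exact ⟨c, by rw [← dist_eq_norm]; exact hab⟩

lemma op_eq_zero (a : Op Y) (h : ∀ y, a (del y) = 0) : a = 0 := by
  classical
  ext1 ξ
  have h1 := (lp.hasSum_single (p := 2) (by norm_num) ξ).mapL a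
  have h2 : (fun y => a (lp.single 2 y (ξ y))) = fun _ => 0 := by
    funext y
    have : lp.single 2 y (ξ y) = ξ y • (del y : ℓ²(Y, ℂ)) := by
      unfold del
      rw [← lp.single_smul]; simp
    rw [this, map_smul, h, smul_zero]
  rw [h2] at h1
  exact h1.unique hasSum_zero

end groupAlgebra

/-! ### No amenable URS implies C*-simple -/

lemma isUnit_redCstar (w : redCstar G) (h : ‖1 - w‖ < 1) : IsUnit w := by
  have : CompleteSpace (redCstar G) := redCstar_isClosed.completeSpace_coe
  have := isUnit_one_sub_of_norm_lt_one h
  simpa using this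

open Classical in
lemma vanish_of_free
    (hfree : ∀ x : LInf G → ℝ, Mean x → ∀ F : Finset G, 1 ∉ F →
      ∃ g : G, ∀ s ∈ F, (LMod G G).sh s ((LMod G G).sh g x) ≠ (LMod G G).sh g x)
    (I : TwoSidedIdeal (redCstar G)) (hI : I ≠ ⊤) (a : redCstar G) (ha : a ∈ I) :
    (a : Op G) (del 1) = 0 := by
  let W : Submodule ℝ (Op G) :=
    { carrier := {w | ∃ b : redCstar G, b ∈ I ∧ (b : Op G) = w}
      zero_mem' := ⟨0, I.zero_mem, rfl⟩
      add_mem' := by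
        rintro _ _ ⟨b, hb, rfl⟩ ⟨c, hc, rfl⟩
        exact ⟨b + c, I.add_mem hb hc, rfl⟩
      smul_mem' := by
        rintro r _ ⟨b, hb, rfl⟩
        refine ⟨algebraMap ℂ (redCstar G) r * b, I.mul_mem_left _ _ hb, ?_⟩
        rw [← Algebra.smul_def]; rfl }
  have hWconj : ∀ g : G, ∀ w ∈ W, (OMod G G).act g w ∈ W := by
    rintro g _ ⟨b, hb, rfl⟩
    exact ⟨⟨perm g, perm_mem_redCstar g⟩ * b * ⟨perm g⁻¹, perm_mem_redCstar g⁻¹⟩,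
      I.mul_mem_right _ _ (I.mul_mem_left _ _ hb), rfl⟩
  obtain ⟨ρ, hρ, hρW⟩ := exists_state_zero (1 : Op G) W (by
    rintro _ ⟨b, hb, rfl⟩
    by_contra! hlt
    obtain ⟨u, rfl⟩ := isUnit_redCstar b hlt
    apply hI
    apply I.eq_top
    have := I.mul_mem_left (↑u⁻¹ : redCstar G) _ hb
    rwa [Units.inv_mul] at this)
  obtain ⟨L, hL, hLm⟩ := exists_isMinL _ hρ.mulOp
  obtain ⟨x, hx⟩ := hL.compact.extremePoints_nonempty hL.nonempty
  obtain ⟨m, hm, hxm⟩ := hLm x hx.1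
  have hρ' : IsState (1 : Op G) ((OMod G G).conv m ρ) := GMod.conv_isState (α := OMod G G) hm hρ
  have hx' : (OMod G G).conv m ρ ∘ mulOp = x := by
    rw [hxm, ← GMod.conv_comp (α := OMod G G) (β := LMod G G)]
    intro g w
    rw [OMod_act, perm_mulOp]
  have hW' : ∀ w ∈ W, (OMod G G).conv m ρ w = 0 := by
    intro w hw
    have : (fun g => ρ ((OMod G G).act g⁻¹ w)) = fun _ => 0 := by
      funext g; exact hρW _ (hWconj _ _ hw)
    simp only [GMod.conv, this]
    have h0 : toB (fun _ : G => (0 : ℝ)) = 0 := toB_coe 0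
    rw [h0, hm.zero]
  have key : ∀ ε : ℝ, 0 < ε → ‖(a : Op G) (del 1)‖ ^ 2 ≤ 2 * ε := by
    intro ε hε
    obtain ⟨c, hc⟩ := redCstar_approx (star a * a).2 hε
    obtain ⟨g, hg⟩ := hfree x (hL.mean x hx.1) (c.coeff.support.erase 1) (by simp)
    set ρ'' := (OMod G G).sh g ((OMod G G).conv m ρ)
    have hρ'' : IsState (1 : Op G) ρ'' := GMod.sh_isState (α := OMod G G) hρ' g
    have hx'' : ρ'' ∘ mulOp = (LMod G G).sh g x := by
      rw [← hx', ← GMod.sh_comp (α := OMod G G) (β := LMod G G)]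
      intro g w
      rw [OMod_act, perm_mulOp]
    have h1 : ρ'' (repn G G c) = ρ'' (c.coeff 1 • 1) :=
      state_repn hρ'' c fun s hs z => hL.kill (hL.sh_ext hx g) hρ'' hx'' s (hg s hs) z
    have h2 : ρ'' (star a * a : redCstar G) = 0 :=
      hW' _ (hWconj _ _ ⟨_, I.mul_mem_left _ _ ha, rfl⟩)
    have h3 := (hρ''.abs_le _).trans hc.le
    rw [hρ''.sub, h2, h1] at h3
    set r := ‖(a : Op G) (del 1)‖ ^ 2
    have h4 : ‖(r : ℂ) - c.coeff 1‖ ≤ ε := by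
      rw [← repn_trace]
      have e : (r : ℂ) = ((star a * a : redCstar G) : Op G) (del 1) 1 := by
        rw [coord_eq_inner]
        change _ = inner ℂ (del 1) ((star (a : Op G)) ((a : Op G) (del 1)))
        rw [ContinuousLinearMap.star_eq_adjoint, ContinuousLinearMap.adjoint_inner_right,
          inner_self_eq_norm_sq_to_K]
        simp [r]
      rw [e]
      refine le_trans (norm_coord_le (((star a * a : redCstar G) : Op G) (del 1) - (repn G G c) (del 1)) 1) ?_
      have := ((star a * a : redCstar G) - repn G G c : Op G).le_opNorm (del 1)
      rw [norm_del, mul_one] at this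
      exact this.trans hc.le
    have h5 : ρ'' ((r : ℂ) • 1) = r := by
      have := hρ''.smul r 1
      rw [hρ''.one, mul_one] at this
      exact this
    have h6 := hρ''.abs_le (((r : ℂ) - c.coeff 1) • (1 : Op G))
    rw [norm_smul] at h6
    have h7 : ‖(1 : Op G)‖ ≤ 1 := ContinuousLinearMap.norm_id_le
    have h8 := h6.trans ((mul_le_mul_of_nonneg_left h7 (norm_nonneg _)).trans ((mul_one _).trans_le h4))
    rw [sub_smul, hρ''.sub, h5] at h8
    rw [abs_le] at h3 h8
    linarith
  have h0 : ‖(a : Op G) (del 1)‖ ^ 2 ≤ 0 := by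
    refine le_of_forall_pos_le_add fun ε hε => ?_
    have := key (ε / 2) (by linarith)
    linarith
  have h1 : ‖(a : Op G) (del 1)‖ = 0 := by
    have := sq_nonneg ‖(a : Op G) (del 1)‖
    exact pow_eq_zero_iff (two_ne_zero) |>.1 (le_antisymm h0 this)
  exact norm_eq_zero.1 h1

theorem simple_of_free
    (hfree : ∀ x : LInf G → ℝ, Mean x → ∀ F : Finset G, 1 ∉ F →
      ∃ g : G, ∀ s ∈ F, (LMod G G).sh s ((LMod G G).sh g x) ≠ (LMod G G).sh g x) :
    IsCstarSimple G := by
  intro I _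
  by_cases hI : I = ⊤
  · exact Or.inr hI
  left
  rw [eq_bot_iff]
  intro a ha
  rw [TwoSidedIdeal.mem_bot]
  apply Subtype.ext
  refine op_eq_zero _ fun g => ?_
  have h := vanish_of_free hfree I hI
    (⟨perm g⁻¹, perm_mem_redCstar g⁻¹⟩ * a * ⟨perm g, perm_mem_redCstar g⟩)
    (I.mul_mem_right _ _ (I.mul_mem_left _ _ ha))
  have h' : perm g⁻¹ ((a : Op G) (perm g (del 1))) = 0 := h
  rw [perm_del, smul_eq_mul, mul_one] at h'
  have h2 := congrArg (perm g) h'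
  rw [map_zero] at h2
  have h3 : (perm g * perm g⁻¹ : Op G) ((a : Op G) (del g)) = 0 := h2
  rw [← perm_mul, mul_inv_cancel, perm_one] at h3
  exact h3

/-! ### The Reiter condition -/

section reiter

lemma l1_summable {Γ : Type*} (μ : lp (fun _ : Γ => ℝ) 1) : Summable fun k => |μ k| := by
  have := (memℓp_gen_iff (p := 1) (by norm_num)).1 (lp.memℓp μ)
  simpa using this

lemma l1_mem {Γ : Type*} {f : Γ → ℝ} (h : Summable fun y => |f y|) : Memℓp f 1 :=
  memℓp_gen (by simpa using h)

lemma l1_norm {Γ : Type*} (μ : lp (fun _ : Γ => ℝ) 1) : ‖μ‖ = ∑' k, |μ k| := by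
  have := lp.norm_rpow_eq_tsum (p := 1) (by norm_num) μ
  simpa using this

/-- Translation on `ℓ¹`. -/
def tr {Γ : Type*} [Group Γ] (s : Γ) : lp (fun _ : Γ => ℝ) 1 →ₗ[ℝ] lp (fun _ : Γ => ℝ) 1 where
  toFun μ := ⟨fun k => μ (s⁻¹ * k), l1_mem ((Equiv.mulLeft s⁻¹).summable_iff.2 (l1_summable μ))⟩
  map_add' a b := by ext y; rfl
  map_smul' c a := by ext y; rfl

lemma tr_apply {Γ : Type*} [Group Γ] (s : Γ) (μ : lp (fun _ : Γ => ℝ) 1) (k : Γ) :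
    tr s μ k = μ (s⁻¹ * k) := rfl

lemma reiter {Γ : Type*} [Group Γ] (h : IsAmenable Γ) (S : Finset Γ) {ε : ℝ} (hε : 0 < ε) :
    ∃ μ : Γ → ℝ, (∀ k, 0 ≤ μ k) ∧ HasSum μ 1 ∧ ∀ s ∈ S, ∑' k, |μ (s⁻¹ * k) - μ k| < ε := by
  classical
  obtain ⟨m, hm1, hm2, hm3⟩ := h
  have hm : IsState (1 : LInf Γ) m := isState_of_nonneg (map_add m) (fun c a => map_smul m c a) hm1 hm2
  let E := S → lp (fun _ : Γ => ℝ) 1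
  let P : Set (lp (fun _ : Γ => ℝ) 1) := {μ | (∀ k, 0 ≤ μ k) ∧ HasSum (fun k => μ k) 1}
  have hP : Convex ℝ P := by
    intro μ hμ ν hν a b ha hb hab
    refine ⟨fun k => ?_, ?_⟩
    · exact add_nonneg (mul_nonneg ha (hμ.1 k)) (mul_nonneg hb (hν.1 k))
    · have := (hμ.2.mul_left a).add (hν.2.mul_left b)
      rw [mul_one, mul_one, hab] at this
      exact this
  let T : lp (fun _ : Γ => ℝ) 1 →ₗ[ℝ] E := LinearMap.pi fun s : S => tr (s : Γ) - LinearMap.id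
  by_cases hd : Disjoint (Metric.ball (0 : E) ε) (T '' P)
  · exfalso
    obtain ⟨f, u, hf, hu⟩ := geometric_hahn_banach_open (convex_ball (0 : E) ε) Metric.isOpen_ball
      (hP.linear_image T) hd
    have hu0 : 0 < u := by simpa using hf 0 (Metric.mem_ball_self hε)
    let δ : Γ → lp (fun _ : Γ => ℝ) 1 := fun k => lp.single 1 k 1
    have hδ : ∀ k, δ k ∈ P := fun k => by
      refine ⟨fun j => ?_, ?_⟩
      · by_cases h : j = k
        · subst h; simp [δ]
        · simp only [δ]; rw [lp.single_apply_ne _ _ _ h]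
      · have := hasSum_single (f := fun j => δ k j) k (fun j h => by
          simp only [δ]; rw [lp.single_apply_ne _ _ _ h])
        simpa [δ] using this
    have htr : ∀ s k, tr s (δ k) = δ (s * k) := fun s k => by
      ext j
      rw [tr_apply]
      by_cases h : j = s * k
      · subst h; simp [δ]
      · simp only [δ]
        rw [lp.single_apply_ne _ _ _ h, lp.single_apply_ne]
        intro h'; apply h; rw [← h']; simp
    let φ : S → Γ → ℝ := fun s k => f (Pi.single s (δ k))
    have hφ : ∀ s k, |φ s k| ≤ ‖f‖ := fun s k => by
      refine (f.le_opNorm _).trans ?_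
      have : ‖(Pi.single s (δ k) : E)‖ ≤ 1 := by
        rw [pi_norm_le_iff_of_nonneg zero_le_one]
        intro t
        by_cases h : t = s
        · subst h; rw [Pi.single_eq_same]; simp only [δ]; rw [lp.norm_single (by norm_num)]; simp
        · rw [Pi.single_eq_of_ne h]; simp
      exact (mul_le_mul_of_nonneg_left this (norm_nonneg _)).trans (mul_one _).le
    have hφT : ∀ k, f (T (δ k)) = ∑ s : S, (φ s (s * k) - φ s k) := fun k => by
      have e : T (δ k) = ∑ s : S, Pi.single s (T (δ k) s) :=
        (Finset.univ_sum_single (T (δ k))).symm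
      rw [e, map_sum]
      refine Finset.sum_congr rfl fun s _ => ?_
      have : T (δ k) s = δ (s * k) - δ k := by
        rw [← htr]; rfl
      rw [this, Pi.single_sub, map_sub]
    have h1 : ∀ k, u ≤ ∑ s : S, (φ s (s * k) - φ s k) := fun k => by
      rw [← hφT]; exact hu _ ⟨_, hδ k, rfl⟩
    let F : LInf Γ := ∑ s : S, (translInfty (s : Γ)⁻¹ (toB (φ s)) - toB (φ s))
    have hF : ∀ k, F k = ∑ s : S, (φ s (s * k) - φ s k) := fun k => by
      have e1 : ∀ (A : Finset S) (q : S → LInf Γ), (∑ s ∈ A, q s) k = ∑ s ∈ A, q s k := by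
        intro A q
        induction A using Finset.induction_on with
        | empty => rfl
        | insert a A ha ih => rw [Finset.sum_insert ha, Finset.sum_insert ha, ← ih]; rfl
      simp only [F]
      rw [e1]
      refine Finset.sum_congr rfl fun s _ => ?_
      rw [LInf.sub_apply, toB_apply ‖f‖ (hφ s)]
      congr 1
      change toB (φ s) ((s : Γ)⁻¹⁻¹ * k) = _
      rw [toB_apply ‖f‖ (hφ s), inv_inv]
    have h2 : m F = 0 := by
      simp only [F]
      rw [map_sum]
      exact Finset.sum_eq_zero fun s _ => by rw [map_sub, hm3, sub_self]
    have h3 := hm.mono (u • 1) F (fun k => by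
      rw [hF, LInf.smul_apply, LInf.one_apply, mul_one]; exact h1 k)
    rw [hm.smul, hm.one, h2] at h3
    linarith
  · rw [Set.not_disjoint_iff] at hd
    obtain ⟨_, hv, μ, hμ, rfl⟩ := hd
    refine ⟨fun k => μ k, hμ.1, hμ.2, fun s hs => ?_⟩
    have h1 := norm_le_pi_norm (T μ) ⟨s, hs⟩
    rw [mem_ball_zero_iff] at hv
    have h2 := h1.trans_lt hv
    have h3 : T μ ⟨s, hs⟩ = tr s μ - μ := rfl
    rw [h3, l1_norm] at h2
    exact h2

lemma reiter_sub {H : Subgroup G} (h : IsAmenable H) (S : Finset H) {ε : ℝ} (hε : 0 < ε) :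
    ∃ η : ℓ²(G, ℂ), ‖η‖ = 1 ∧ (∀ g ∉ H, η g = 0) ∧ ∀ s ∈ S, ‖perm (s : G) η - η‖ ≤ ε := by
  classical
  obtain ⟨μ, h0, h1, h2⟩ := reiter h S (ε := ε ^ 2) (by positivity)
  let f : G → ℂ := fun g => if hg : g ∈ H then (Real.sqrt (μ ⟨g, hg⟩) : ℂ) else 0
  have hfH : ∀ k : H, f k = (Real.sqrt (μ k) : ℂ) := fun k => by simp [f]
  have hf0 : ∀ g ∉ H, f g = 0 := fun g hg => by simp [f, hg]
  have hs : HasSum (fun g => ‖f g‖ ^ 2) 1 := by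
    rw [← Function.Injective.hasSum_iff (g := (Subtype.val : H → G)) (f := fun g => ‖f g‖ ^ 2)
      Subtype.val_injective (fun g hg => by
      rw [hf0 g (by simpa using hg)]; simp)]
    convert h1 using 1
    funext k
    simp only [Function.comp]
    rw [hfH, Complex.norm_real, Real.norm_eq_abs, sq_abs, Real.sq_sqrt (h0 k)]
  let η : ℓ²(G, ℂ) := ⟨f, l2_mem hs.summable⟩
  refine ⟨η, ?_, hf0, fun s hS => ?_⟩
  · have := l2_norm_sq η
    rw [show (∑' y, ‖η y‖ ^ 2) = 1 from hs.tsum_eq] at this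
    exact (sq_eq_sq₀ (norm_nonneg _) zero_le_one).1 (by rw [this]; norm_num)
  · refine (sq_le_sq₀ (norm_nonneg _) hε.le).1 ?_
    rw [l2_norm_sq]
    have e1 : ∑' y, ‖(perm (s : G) η - η) y‖ ^ 2 = ∑' k : H, ‖(perm (s : G) η - η) k‖ ^ 2 := by
      symm
      refine Subtype.val_injective.tsum_eq (f := fun g => ‖(perm (s : G) η - η) g‖ ^ 2) ?_
      intro g hg
      by_contra hn
      apply hg
      have hgH : g ∉ H := by simpa using hn
      have : (perm (s : G) η - η) g = f ((s : G)⁻¹ * g) - f g := rfl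
      simp only
      rw [this, hf0 g hgH, hf0 _ (fun hh => hgH (by
        have := H.mul_mem s.2 hh
        simpa using this))]
      simp
    rw [e1]
    have hsm : Summable fun k : H => |μ (s⁻¹ * k) - μ k| :=
      (((Equiv.mulLeft s⁻¹).summable_iff.2 h1.summable).sub h1.summable).abs
    refine le_trans (Summable.tsum_le_tsum (fun k => ?_)
      ((l2_summable (perm (s : G) η - η)).subtype _) hsm) (h2 s hS).le
    have : (perm (s : G) η - η) (k : G) = f ((s⁻¹ * k : H) : G) - f k := rfl
    simp only [Function.comp]
    rw [this, hfH, hfH, ← Complex.ofReal_sub, Complex.norm_real, Real.norm_eq_abs, sq_abs]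
    have ha := h0 (s⁻¹ * k)
    have hb := h0 k
    have qa := Real.sq_sqrt ha
    have qb := Real.sq_sqrt hb
    have pa := Real.sqrt_nonneg (μ (s⁻¹ * k))
    have pb := Real.sqrt_nonneg (μ k)
    set a := Real.sqrt (μ (s⁻¹ * k))
    set b := Real.sqrt (μ k)
    rw [← qa, ← qb]
    rcases le_total b a with hab | hab
    · have := le_abs_self (a ^ 2 - b ^ 2)
      nlinarith
    · have := neg_abs_le (a ^ 2 - b ^ 2)
      nlinarith

end reiter

/-! ### States from amenable subgroups -/

section amenState
variable {Y : Type*}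

/-- Vector state. -/
def vec (η : ℓ²(Y, ℂ)) : Op Y → ℝ := fun T => (inner ℂ η (T η)).re

lemma vec_isState (η : ℓ²(Y, ℂ)) (hη : ‖η‖ = 1) : IsState (1 : Op Y) (vec η) := by
  refine ⟨fun a b => ?_, fun c a => ?_, ?_, fun T => ?_⟩
  · simp [vec]
  · change (inner ℂ η ((c : ℂ) • a η)).re = _
    rw [inner_smul_right]; simp [vec]
  · change (inner ℂ η η).re = 1
    rw [inner_self_eq_norm_sq_to_K, hη]; simp
  · refine (Complex.re_le_norm _).trans ((norm_inner_le_norm _ _).trans ?_)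
    have := T.le_opNorm η
    rw [hη] at this ⊢
    linarith

lemma vec_star_mul (η : ℓ²(Y, ℂ)) (T : Op Y) : vec η (star T * T) = ‖T η‖ ^ 2 := by
  change (inner ℂ η ((star T) (T η))).re = _
  rw [ContinuousLinearMap.star_eq_adjoint, ContinuousLinearMap.adjoint_inner_right,
    inner_self_eq_norm_sq_to_K]
  norm_cast

lemma vec_pos (η : ℓ²(Y, ℂ)) (C T : Op Y) :
    vec η (star (C * T) * (C * T)) ≤ ‖C‖ ^ 2 * vec η (star T * T) := by
  rw [vec_star_mul, vec_star_mul, ← mul_pow]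
  exact pow_le_pow_left₀ (norm_nonneg _) (C.le_opNorm (T η)) 2

lemma vec_near [MulAction G Y] (η : ℓ²(Y, ℂ)) (hη : ‖η‖ = 1) (s : G) (z : ℂ) :
    |vec η (z • perm s) - z.re| ≤ ‖z‖ * ‖perm s η - η‖ := by
  have e : vec η (z • perm s) - z.re = (z * inner ℂ η (perm s η - η)).re := by
    rw [inner_sub_right, inner_self_eq_norm_sq_to_K, hη]
    change (inner ℂ η (z • perm s η)).re - _ = _
    rw [inner_smul_right]; simp [mul_sub]
  rw [e]
  refine (Complex.abs_re_le_norm _).trans ?_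
  rw [norm_mul]
  gcongr
  refine (norm_inner_le_norm _ _).trans ?_
  rw [hη, one_mul]

lemma vec_zero {H : Subgroup G} (η : ℓ²(G, ℂ)) (hη : ∀ g ∉ H, η g = 0) (s : G) (hs : s ∉ H) (z : ℂ) :
    vec η (z • perm s) = 0 := by
  change (inner ℂ η (z • perm s η)).re = _
  rw [inner_smul_right, lp.inner_eq_tsum]
  have : (fun i => inner ℂ (η i) (perm s η i)) = fun _ => 0 := by
    funext g
    rw [perm_apply]
    by_cases hg : g ∈ H
    · rw [hη (s⁻¹ • g)]
      · simp
      · intro h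
        apply hs
        have := H.mul_mem hg (H.inv_mem h)
        simpa using this
    · rw [hη g hg]; simp
  rw [this]; simp

lemma amen_state {H : Subgroup G} (h : IsAmenable H) : ∃ ρ : Op G → ℝ, IsState (1 : Op G) ρ ∧
    (∀ s ∈ H, ∀ z : ℂ, ρ (z • perm s) = z.re) ∧ (∀ s ∉ H, ∀ z : ℂ, ρ (z • perm s) = 0) ∧
    ∀ C T : Op G, ρ (star (C * T) * (C * T)) ≤ ‖C‖ ^ 2 * ρ (star T * T) := by
  classical
  have hch : ∀ i : Finset H × ℕ, ∃ η : ℓ²(G, ℂ), ‖η‖ = 1 ∧ (∀ g ∉ H, η g = 0) ∧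
      ∀ s ∈ i.1, ‖perm (s : G) η - η‖ ≤ 1 / ((i.2 : ℝ) + 1) := fun i =>
    reiter_sub h i.1 (by positivity)
  choose η h1 h2 h3 using hch
  let U : Ultrafilter (Finset H × ℕ) := Ultrafilter.of Filter.atTop
  obtain ⟨ρ, hρ, hlim⟩ := (St_isCompact (1 : Op G)).ultrafilter_le_nhds
    (U.map fun i => vec (η i)) (by
      rw [Filter.le_principal_iff, Ultrafilter.mem_coe, Ultrafilter.mem_map]
      exact Filter.univ_mem' fun i => vec_isState (η i) (h1 i))
  have hlim' : ∀ T, Filter.Tendsto (fun i => vec (η i) T) U (nhds (ρ T)) := fun T =>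
    ((continuous_apply T).tendsto ρ).comp hlim
  refine ⟨ρ, hρ, fun s hs z => ?_, fun s hs z => ?_, fun C T => ?_⟩
  · have hle : (U : Filter (Finset H × ℕ)) ≤ Filter.atTop := Ultrafilter.of_le _
    refine tendsto_nhds_unique (hlim' _) ?_
    refine Filter.Tendsto.mono_left ?_ hle
    rw [tendsto_iff_norm_sub_tendsto_zero]
    have hg : Filter.Tendsto (fun i : Finset H × ℕ => ‖z‖ * (1 / ((i.2 : ℝ) + 1))) Filter.atTop (nhds 0) := by
      have e := (tendsto_one_div_add_atTop_nhds_zero_nat (𝕜 := ℝ)).comp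
        (Filter.tendsto_snd (f := (Filter.atTop : Filter (Finset H))) (g := Filter.atTop))
      rw [Filter.prod_atTop_atTop_eq] at e
      have := e.const_mul ‖z‖
      rw [mul_zero] at this
      exact this
    refine squeeze_zero' (Filter.Eventually.of_forall fun i => norm_nonneg _) ?_ hg
    filter_upwards [Filter.eventually_ge_atTop (({⟨s, hs⟩}, 0) : Finset H × ℕ)] with i hi
    refine (vec_near (η i) (h1 i) s z).trans ?_
    gcongr
    exact h3 i ⟨s, hs⟩ (hi.1 (Finset.mem_singleton_self _))
  · refine tendsto_nhds_unique (hlim' _) ?_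
    simp only [vec_zero (η _) (h2 _) s hs z]
    exact tendsto_const_nhds
  · exact le_of_tendsto_of_tendsto' (hlim' _) ((hlim' _).const_mul _) fun i => vec_pos _ _ _

lemma repn_star_exists [MulAction G Y] (c : MonoidAlgebra ℂ G) : ∃ d : MonoidAlgebra ℂ G,
    repn G Y d = star (repn G Y c) ∧ repn G G d = star (repn G G c) := by
  induction c using MonoidAlgebra.induction_linear with
  | zero => exact ⟨0, by simp⟩
  | add x y h1 h2 =>
    obtain ⟨c, hc, hc'⟩ := h1
    obtain ⟨d, hd, hd'⟩ := h2
    exact ⟨c + d, by rw [map_add, map_add, star_add, hc, hd], by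
      rw [map_add, map_add, star_add, hc', hd']⟩
  | single m r => exact ⟨MonoidAlgebra.single m⁻¹ (star r), by
      rw [repn_single, repn_single, star_smul, perm_star], by
      rw [repn_single, repn_single, star_smul, perm_star]⟩

/-- The base point of the coset space. -/
abbrev bp (H : Subgroup G) : G ⧸ H := ((1 : G) : G ⧸ H)

lemma amen_state_eq {H : Subgroup G} {ρ : Op G → ℝ} (hρ : IsState (1 : Op G) ρ)
    (h1 : ∀ s ∈ H, ∀ z : ℂ, ρ (z • perm s) = z.re) (h2 : ∀ s ∉ H, ∀ z : ℂ, ρ (z • perm s) = 0)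
    (c : MonoidAlgebra ℂ G) : ρ (repn G G c) = vec (del (bp H)) (repn G (G ⧸ H) c) := by
  have hv := vec_isState (del (bp H)) (norm_del _)
  induction c using MonoidAlgebra.induction_linear with
  | zero => rw [map_zero, map_zero, hρ.zero, hv.zero]
  | add x y hx hy => rw [map_add, map_add, hρ.add, hv.add, hx, hy]
  | single m r =>
    rw [repn_single, repn_single]
    have e : vec (del (bp H)) (r • perm m) = (r * del (m • bp H) (bp H)).re := by
      change (inner ℂ (del (bp H)) (r • perm m (del (bp H)))).re = _
      rw [inner_smul_right, ← coord_eq_inner, perm_del]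
    rw [e, del_apply]
    have hm : (bp H = m • bp H) ↔ m ∈ H := by
      change (((1 : G) : G ⧸ H) = ((m * 1 : G) : G ⧸ H)) ↔ _
      rw [QuotientGroup.eq]; simp
    by_cases hmH : m ∈ H
    · rw [if_pos (hm.2 hmH), h1 m hmH]; simp
    · rw [if_neg (fun h => hmH (hm.1 h)), h2 m hmH]; simp

lemma single_eq_smul_del [DecidableEq Y] (y : Y) (a : ℂ) : lp.single 2 y a = a • (del y : ℓ²(Y, ℂ)) := by
  ext z
  change _ = a * del y z
  rw [del_apply]
  by_cases h : z = y
  · subst h; simp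
  · rw [lp.single_apply_ne _ _ _ h, if_neg h, mul_zero]

lemma dense_cyclic (H : Subgroup G) (ξ : ℓ²(G ⧸ H, ℂ)) :
    ξ ∈ closure (Set.range fun b : MonoidAlgebra ℂ G => repn G (G ⧸ H) b (del (bp H))) := by
  classical
  have h1 := lp.hasSum_single (p := 2) (by norm_num) ξ
  refine mem_closure_of_tendsto h1 (Filter.Eventually.of_forall fun A => ?_)
  refine ⟨∑ y ∈ A, MonoidAlgebra.single (Quotient.out y) (ξ y), ?_⟩
  simp only [map_sum, repn_single]
  rw [sum_apply]
  refine Finset.sum_congr rfl fun y _ => ?_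
  rw [smul_apply, perm_del]
  have : Quotient.out y • bp H = y := by
    change ((Quotient.out y * 1 : G) : G ⧸ H) = y
    rw [mul_one]; exact Quotient.out_eq y
  rw [this]
  exact (single_eq_smul_del y _).symm

lemma repn_norm_le {H : Subgroup G} (h : IsAmenable H) (c : MonoidAlgebra ℂ G) :
    ‖repn G (G ⧸ H) c‖ ≤ ‖repn G G c‖ := by
  obtain ⟨ρ, hρ, h1, h2, h3⟩ := amen_state h
  refine ContinuousLinearMap.opNorm_le_bound _ (norm_nonneg _) fun ξ => ?_
  have hcl : IsClosed {ξ : ℓ²(G ⧸ H, ℂ) | ‖repn G (G ⧸ H) c ξ‖ ≤ ‖repn G G c‖ * ‖ξ‖} :=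
    isClosed_le (by fun_prop) (by fun_prop)
  refine closure_minimal ?_ hcl (dense_cyclic H ξ)
  rintro _ ⟨b, rfl⟩
  have key : ∀ d : MonoidAlgebra ℂ G, ρ (star (repn G G d) * repn G G d) =
      ‖repn G (G ⧸ H) d (del (bp H))‖ ^ 2 := by
    intro d
    obtain ⟨d', e1, e2⟩ := repn_star_exists (Y := G ⧸ H) d
    rw [← e2, ← map_mul, amen_state_eq hρ h1 h2, map_mul, e1, vec_star_mul]
  have := h3 (repn G G c) (repn G G b)
  rw [← map_mul, key, key, ← mul_pow, map_mul] at this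
  exact (sq_le_sq₀ (norm_nonneg _) (by positivity)).1 this

end amenState

/-! ### C*-simplicity and quasi-regular representations -/

section quasireg
variable {H : Subgroup G}

variable (H) in
/-- The joint representation. -/
def jointHom : G →* Op G × Op (G ⧸ H) := (permHom G G).prod (permHom G (G ⧸ H))

variable (H) in
/-- The closed star algebra generated by the joint representation. -/
def jointAlg : StarSubalgebra ℂ (Op G × Op (G ⧸ H)) :=
  (StarAlgebra.adjoin ℂ (Set.range (jointHom H))).topologicalClosure

lemma joint_lift (c : MonoidAlgebra ℂ G) :
    MonoidAlgebra.lift ℂ (Op G × Op (G ⧸ H)) G (jointHom H) c = (repn G G c, repn G (G ⧸ H) c) := by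
  induction c using MonoidAlgebra.induction_linear with
  | zero => simp; rfl
  | add x y hx hy => rw [map_add, map_add, map_add, hx, hy]; rfl
  | single m r => rw [MonoidAlgebra.lift_single, repn_single, repn_single]; rfl

lemma joint_mem (c : MonoidAlgebra ℂ G) : (repn G G c, repn G (G ⧸ H) c) ∈ jointAlg H := by
  apply StarSubalgebra.le_topologicalClosure
  rw [← joint_lift, MonoidAlgebra.lift_apply]
  refine sum_mem fun s _ => ?_
  exact SMulMemClass.smul_mem _ (StarAlgebra.subset_adjoin ℂ _ ⟨s, rfl⟩)

lemma joint_isClosed : IsClosed (jointAlg H : Set (Op G × Op (G ⧸ H))) := by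
  rw [jointAlg, StarSubalgebra.topologicalClosure_coe]
  exact isClosed_closure

lemma joint_induction (P : Op G × Op (G ⧸ H) → Prop) (hP : IsClosed {d | P d})
    (h : ∀ c : MonoidAlgebra ℂ G, P (repn G G c, repn G (G ⧸ H) c))
    {d : Op G × Op (G ⧸ H)} (hd : d ∈ jointAlg H) : P d := by
  rw [jointAlg, ← SetLike.mem_coe, StarSubalgebra.topologicalClosure_coe] at hd
  refine closure_minimal ?_ hP hd
  intro a ha
  obtain ⟨c, rfl⟩ := adjoin_exists (jointHom H) (fun g => by
    change (star (perm g), star (perm g)) = (perm g⁻¹, perm g⁻¹)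
    rw [perm_star, perm_star]) ha
  rw [joint_lift]; exact h c

lemma redCstar_induction (P : Op G → Prop) (hP : IsClosed {d | P d})
    (h : ∀ c : MonoidAlgebra ℂ G, P (repn G G c)) {a : Op G} (ha : a ∈ redCstar G) : P a := by
  rw [redCstar, ← SetLike.mem_coe, StarSubalgebra.topologicalClosure_coe] at ha
  refine closure_minimal ?_ hP ha
  rw [range_lreg]
  intro a ha
  obtain ⟨c, rfl⟩ := adjoin_exists (permHom G G) (fun g => perm_star g) ha
  exact h c

lemma repn_mem_redCstar (c : MonoidAlgebra ℂ G) : repn G G c ∈ redCstar G := by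
  rw [repn_sum]
  exact sum_mem fun s _ => SMulMemClass.smul_mem _ (perm_mem_redCstar s)

lemma joint_norm_le (hH : IsAmenable H) {d : Op G × Op (G ⧸ H)} (hd : d ∈ jointAlg H) :
    ‖d.2‖ ≤ ‖d.1‖ :=
  joint_induction (fun d => ‖d.2‖ ≤ ‖d.1‖) (isClosed_le (by fun_prop) (by fun_prop))
    (fun c => repn_norm_le hH c) hd

lemma joint_fst_mem {d : Op G × Op (G ⧸ H)} (hd : d ∈ jointAlg H) : d.1 ∈ redCstar G :=
  joint_induction (fun d => d.1 ∈ redCstar G) (redCstar_isClosed.preimage continuous_fst)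
    (fun c => repn_mem_redCstar c) hd

variable (H) in
/-- The kernel ideal. -/
def kerIdeal : TwoSidedIdeal (redCstar G) :=
  TwoSidedIdeal.mk' {a | ((a : Op G), (0 : Op (G ⧸ H))) ∈ jointAlg H}
    (zero_mem (jointAlg H))
    (fun {x y} hx hy => by
      have hx1 : ((x : Op G), (0 : Op (G ⧸ H))) ∈ jointAlg H := hx
      have hy1 : ((y : Op G), (0 : Op (G ⧸ H))) ∈ jointAlg H := hy
      have := add_mem hx1 hy1
      simpa using this)
    (fun {x} hx => by
      have hx1 : ((x : Op G), (0 : Op (G ⧸ H))) ∈ jointAlg H := hx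
      have := neg_mem hx1
      simpa using this)
    (fun {x y} hy => by
      refine redCstar_induction (fun a => (a * (y : Op G), (0 : Op (G ⧸ H))) ∈ jointAlg H)
        (joint_isClosed.preimage (by fun_prop)) (fun c => ?_) x.2
      have := mul_mem (joint_mem (H := H) c) hy
      simpa using this)
    (fun {x y} hx => by
      refine redCstar_induction (fun a => ((x : Op G) * a, (0 : Op (G ⧸ H))) ∈ jointAlg H)
        (joint_isClosed.preimage (by fun_prop)) (fun c => ?_) y.2
      have := mul_mem hx (joint_mem (H := H) c)
      simpa using this)

lemma mem_kerIdeal (a : redCstar G) :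
    a ∈ kerIdeal H ↔ ((a : Op G), (0 : Op (G ⧸ H))) ∈ jointAlg H := by
  unfold kerIdeal
  rw [TwoSidedIdeal.mem_mk']; rfl

lemma kerIdeal_bot (hs : IsCstarSimple G) (hH : IsAmenable H) : kerIdeal H = ⊥ := by
  refine (hs (kerIdeal H) ?_).resolve_right ?_
  · have : ((kerIdeal H : TwoSidedIdeal (redCstar G)) : Set (redCstar G)) =
      (fun a : redCstar G => ((a : Op G), (0 : Op (G ⧸ H)))) ⁻¹' (jointAlg H) := by
      ext a; exact mem_kerIdeal a
    rw [this]
    exact joint_isClosed.preimage (by fun_prop)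
  · intro htop
    have h1 : (1 : redCstar G) ∈ kerIdeal H := by rw [htop]; trivial
    rw [mem_kerIdeal] at h1
    have h2 := sub_mem (one_mem (jointAlg H)) h1
    have h3 := joint_norm_le hH h2
    have h4 : ‖(1 : Op (G ⧸ H))‖ ≤ 0 := by simpa using h3
    have h5 : (1 : Op (G ⧸ H)) = 0 := norm_le_zero_iff.1 h4
    have h6 := congrArg (fun T : Op (G ⧸ H) => ‖T (del (bp H))‖) h5
    simp [norm_del] at h6

lemma repn_norm_ge (hs : IsCstarSimple G) (hH : IsAmenable H) (c : MonoidAlgebra ℂ G) :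
    ‖repn G G c‖ ≤ ‖repn G (G ⧸ H) c‖ := by
  have : IsClosed (jointAlg H : Set (Op G × Op (G ⧸ H))) := joint_isClosed
  let φ : jointAlg H →⋆ₐ[ℂ] Op (G ⧸ H) :=
    (StarAlgHom.snd ℂ (Op G) (Op (G ⧸ H))).comp (jointAlg H).subtype
  have hφ : Function.Injective φ := by
    rw [injective_iff_map_eq_zero]
    rintro ⟨⟨a, b⟩, hd⟩ h
    have hb : b = 0 := h
    subst hb
    have ha : (⟨a, joint_fst_mem hd⟩ : redCstar G) ∈ kerIdeal H := (mem_kerIdeal _).2 hd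
    rw [kerIdeal_bot hs hH, TwoSidedIdeal.mem_bot] at ha
    have ha' : a = 0 := congrArg Subtype.val ha
    apply Subtype.ext
    exact Prod.ext ha' rfl
  have h := NonUnitalStarAlgHom.norm_map φ hφ ⟨_, joint_mem c⟩
  have h1 : ‖repn G G c‖ ≤ ‖((repn G G c, repn G (G ⧸ H) c) : Op G × Op (G ⧸ H))‖ :=
    le_max_left _ _
  exact h1.trans h.ge

lemma simple_state (hs : IsCstarSimple G) (hH : IsAmenable H) :
    ∃ ρ : Op (G ⧸ H) → ℝ, IsState (1 : Op (G ⧸ H)) ρ ∧ ∀ s : G, s ≠ 1 → ∀ z : ℂ,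
      ρ (z • perm s) = 0 := by
  let W : Submodule ℝ (Op (G ⧸ H)) :=
    { carrier := {w | ∃ c : MonoidAlgebra ℂ G, c.coeff 1 = 0 ∧ repn G (G ⧸ H) c = w}
      zero_mem' := ⟨0, by simp, by simp⟩
      add_mem' := by
        rintro _ _ ⟨b, hb, rfl⟩ ⟨c, hc, rfl⟩
        exact ⟨b + c, by simp [hb, hc], map_add _ _ _⟩
      smul_mem' := by
        rintro r _ ⟨b, hb, rfl⟩
        exact ⟨(r : ℂ) • b, by simp [hb], map_smul _ _ _⟩ }
  obtain ⟨ρ, hρ, h⟩ := exists_state_zero (1 : Op (G ⧸ H)) W (by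
    rintro _ ⟨c, hc, rfl⟩
    rw [← map_one (repn G (G ⧸ H)), ← map_sub]
    refine le_trans ?_ (repn_norm_ge hs hH _)
    refine le_trans ?_ (coeff_one_le _)
    simp [hc])
  refine ⟨ρ, hρ, fun s hs z => h _ ⟨MonoidAlgebra.single s z, ?_, repn_single s z⟩⟩
  simp [hs]

end quasireg

/-! ### Freeness from simplicity -/

lemma null_cover {Y : Type*} {ν : LInf Y → ℝ} (hν : IsState (1 : LInf Y) ν) {ι : Type*}
    (T : Finset ι) (A : ι → Set Y) (hA : ∀ t ∈ T, ν (ind (A t)) = 0) (B : Set Y)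
    (hB : ∀ y ∈ B, ∃ t ∈ T, y ∈ A t) : ν (ind B) = 0 := by
  classical
  induction T using Finset.induction_on generalizing B with
  | empty =>
    have : B = ∅ := by
      ext y
      simp only [Set.mem_empty_iff_false, iff_false]
      intro hy
      obtain ⟨t, ht, _⟩ := hB y hy
      simp at ht
    subst this
    have h0 : ind (∅ : Set Y) = 0 := by
      ext y; rw [ind_apply, LInf.zero_apply]; simp
    rw [h0, hν.zero]
  | insert a T ha ih =>
    have h1 := ih (fun t ht => hA t (Finset.mem_insert_of_mem ht)) (B \ A a) (by
      rintro y ⟨hy, hya⟩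
      obtain ⟨t, ht, hyt⟩ := hB y hy
      rcases Finset.mem_insert.1 ht with rfl | ht
      · exact absurd hyt hya
      · exact ⟨t, ht, hyt⟩)
    have h2 := hA a (Finset.mem_insert_self _ _)
    have h3 : ν (ind B) ≤ ν (ind (B \ A a) + ind (A a)) := hν.mono _ _ fun y => by
      rw [LInf.add_apply, ind_apply, ind_apply, ind_apply]
      by_cases hb : y ∈ B <;> by_cases hc : y ∈ A a <;> simp [hb, hc]
    rw [hν.add, h1, h2] at h3
    have := hν.ind_nonneg B
    linarith

theorem free_of_simple (hs : IsCstarSimple G) {L : Set (LInf G → ℝ)} (hL : IsMinL L)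
    {x : LInf G → ℝ} (hx : x ∈ L.extremePoints ℝ) (F : Finset G) (hF : 1 ∉ F) :
    ∃ g : G, ∀ s ∈ F, (LMod G G).sh s ((LMod G G).sh g x) ≠ (LMod G G).sh g x := by
  classical
  by_contra! hcon
  let Fx : G → Finset G := fun g =>
    F.filter fun s => (LMod G G).sh s ((LMod G G).sh g x) = (LMod G G).sh g x
  obtain ⟨g0, hg0⟩ : ∃ g0, ∀ g, (Fx g0).card ≤ (Fx g).card := by
    exact ⟨Function.argmin fun g => (Fx g).card, fun g => Function.argmin_le (fun g => (Fx g).card) g⟩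
  obtain ⟨s, hsF, hsx⟩ := hcon g0
  have hs1 : s ≠ 1 := fun h => hF (h ▸ hsF)
  set x0 := (LMod G G).sh g0 x with hx0
  have hx0e : x0 ∈ L.extremePoints ℝ := hL.sh_ext hx g0
  have hxm := hL.mean x hx.1
  let K := stab x
  let σ : G ⧸ K → G := Quotient.out
  have hσ : ∀ y : G ⧸ K, ((σ y : G) : G ⧸ K) = y := fun y => Quotient.out_eq' y
  obtain ⟨ρ, hρ, hρ0⟩ := simple_state hs (stab_amenIn hxm).isAmenable
  let ρ2 := (OMod G (G ⧸ K)).conv x0 ρ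
  have hρ2 : IsState (1 : Op (G ⧸ K)) ρ2 :=
    GMod.conv_isState (α := OMod G (G ⧸ K)) (hL.mean x0 hx0e.1) hρ
  have hρzero : ρ2 ((1 : ℂ) • perm s) = 0 := by
    have h1 : (fun g : G => ρ ((OMod G (G ⧸ K)).act g⁻¹ ((1 : ℂ) • perm s))) = fun _ => 0 := by
      funext g
      rw [OMod_perm]
      apply hρ0
      intro h
      apply hs1
      have : s = g * (g⁻¹ * s * g⁻¹⁻¹) * g⁻¹ := by group
      rw [this, h]; group
    change x0 _ = 0
    rw [h1]
    have h0 : toB (fun _ : G => (0 : ℝ)) = 0 := toB_coe 0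
    rw [h0, (hL.mean x0 hx0e.1).zero]
  let Θ := Theta x hxm σ
  have hΘ : ∀ ν, IsState (1 : LInf (G ⧸ K)) ν → ν ∘ Θ ∈ L := hL.Theta_mem hx.1 σ
  have hν : IsState (1 : LInf (G ⧸ K)) (ρ2 ∘ mulOp) := hρ2.mulOp
  have hΘeq : ∀ g f, Θ ((LMod G G).act g f) = (LMod G (G ⧸ K)).act g (Θ f) := by
    intro g f
    ext y
    rw [LMod_act_apply, Theta_apply, Theta_apply]
    have h1 : (LMod G G).sh (σ y) x ((LMod G G).act g f) = (LMod G G).sh (g⁻¹ * σ y) x f := by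
      simp only [GMod.sh, mul_inv_rev, inv_inv, GMod.act_mul]
    rw [h1]
    have h2 : (σ (g⁻¹ • y))⁻¹ * (g⁻¹ * σ y) ∈ K := by
      rw [← QuotientGroup.eq, hσ]
      conv_lhs => rw [← hσ y]
      rfl
    have h3 : (LMod G G).sh ((σ (g⁻¹ • y))⁻¹ * (g⁻¹ * σ y)) x = x := h2
    have h4 : (LMod G G).sh (g⁻¹ * σ y) x = (LMod G G).sh (σ (g⁻¹ • y)) x := by
      conv_rhs => rw [← h3]
      rw [← GMod.sh_mul]; group
    rw [h4]
  have hνx : (ρ2 ∘ mulOp) ∘ Θ = x0 := by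
    have h1 : ρ2 ∘ mulOp = (LMod G (G ⧸ K)).conv x0 (ρ ∘ mulOp) := by
      rw [GMod.conv_comp (α := OMod G (G ⧸ K)) (β := LMod G (G ⧸ K))]
      intro g w
      rw [OMod_act, perm_mulOp]
    rw [h1, ← GMod.conv_comp (α := LMod G (G ⧸ K)) (β := LMod G G) Θ hΘeq]
    exact hL.zero _ hx0e.1 _ (hΘ _ hρ.mulOp)
  have hnull : (ρ2 ∘ mulOp) (ind {y : G ⧸ K | s • y = y}ᶜ) = 0 := by
    refine null_cover hν (F.filter fun t => (LMod G G).sh t x0 ≠ x0)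
      (fun t => {y | (LMod G G).sh t ((LMod G G).sh (σ y) x) = (LMod G G).sh (σ y) x}) ?_ _ ?_
    · intro t ht
      have ht2 := (Finset.mem_filter.1 ht).2
      obtain ⟨f, hf⟩ := Function.ne_iff.1 ht2
      refine null_of_zero Θ hΘ hν hx0e hνx _ ((LMod G G).act t⁻¹ f - f) ?_ ?_
      · rw [(hL.mean x0 hx0e.1).sub]
        exact sub_ne_zero.2 hf
      · intro y hy
        rw [map_sub, LInf.sub_apply, Theta_apply, Theta_apply, sub_eq_zero]
        exact congrFun hy f
    · intro y hy
      by_contra! hno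
      apply hy
      have hsub : Fx (σ y) ⊆ Fx g0 := by
        intro t ht
        obtain ⟨htF, ht2⟩ := Finset.mem_filter.1 ht
        refine Finset.mem_filter.2 ⟨htF, ?_⟩
        by_contra hne
        exact hno t (Finset.mem_filter.2 ⟨htF, hne⟩) ht2
      have heq := Finset.eq_of_subset_of_card_le hsub (hg0 _)
      have hs3 : s ∈ Fx (σ y) := by
        rw [heq]; exact Finset.mem_filter.2 ⟨hsF, hsx⟩
      have hs4 : s ∈ stab ((LMod G G).sh (σ y) x) := (Finset.mem_filter.1 hs3).2
      rw [stab_sh, mem_conjSub] at hs4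
      change s • y = y
      have h5 : ((σ y : G) : G ⧸ K) = ((s * σ y : G) : G ⧸ K) := by
        rw [QuotientGroup.eq, ← mul_assoc]; exact hs4
      calc s • y = s • ((σ y : G) : G ⧸ K) := by rw [hσ]
        _ = ((s * σ y : G) : G ⧸ K) := rfl
        _ = y := by rw [← h5, hσ]
  have hop : (perm s - 1 : Op (G ⧸ K)) * mulOp (ind {y : G ⧸ K | s • y = y}) = 0 := by
    ext v y
    change (perm s (mulOp (ind {y : G ⧸ K | s • y = y}) v)) y -
      (mulOp (ind {y : G ⧸ K | s • y = y}) v) y = 0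
    rw [perm_apply, mulOp_apply, mulOp_apply, ind_apply, ind_apply]
    by_cases h : s • y = y
    · have h' : s⁻¹ • y = y := by rw [inv_smul_eq_iff, h]
      simp [h, h']
    · have h' : ¬ (y = s⁻¹ • y) := by
        intro h2; apply h; rw [eq_inv_smul_iff] at h2; exact h2
      simp [h, h']
  have h6 : (perm s - 1 : Op (G ⧸ K)) =
      (perm s - 1 : Op (G ⧸ K)) * mulOp (ind {y : G ⧸ K | s • y = y}ᶜ) := by
    rw [← one_sub_mulOp_ind, mul_sub, hop, mul_one, sub_zero]
  have h7 : ρ2 (perm s - 1) = 0 := by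
    rw [h6]; exact (null_mul_ind hρ2 _ hnull _).2
  rw [one_smul] at hρzero
  rw [hρ2.sub, hρzero, hρ2.one] at h7
  norm_num at h7

/-! ### The main theorem -/

theorem no_urs_of_simple (hs : IsCstarSimple G) (X : Set (Subgroup G)) (hX : IsURS G X)
    (hXa : ∀ H ∈ X, IsAmenable H) : X = {(⊥ : Subgroup G)} := by
  classical
  by_contra hne
  obtain ⟨⟨H, hH⟩, hcl, hinv, hmin⟩ := hX
  have hbot : (⊥ : Subgroup G) ∉ X := by
    intro hb
    apply hne
    apply Set.Subset.antisymm
    · intro K hK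
      have h1 := hmin ⊥ hb K hK
      have h2 : closure {L : Subgroup G | ∃ g : G, L = conjSub g ⊥} ⊆
          ⋂ g : {g : G // g ≠ 1}, {L : Subgroup G | (g : G) ∈ L}ᶜ := by
        refine closure_minimal ?_ (isClosed_iInter fun g => (isClopen_mem _).compl.isClosed)
        rintro _ ⟨g, rfl⟩
        rw [Set.mem_iInter]
        rintro ⟨k, hk⟩ hk2
        have hk3 : k ∈ conjSub g ⊥ := hk2
        rw [mem_conjSub, Subgroup.mem_bot] at hk3
        apply hk
        have : k = g * (g⁻¹ * k * g) * g⁻¹ := by group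
        rw [this, hk3]; group
      have h3 := Set.mem_iInter.1 (h2 h1)
      rw [Set.mem_singleton_iff, Subgroup.eq_bot_iff_forall]
      intro k hk
      by_contra hk1
      exact h3 ⟨k, hk1⟩ hk
    · rintro _ rfl; exact hb
  obtain ⟨T, hT⟩ := hcl.isCompact.elim_finite_subcover
    (fun g : {g : G // g ≠ 1} => {L : Subgroup G | (g : G) ∈ L})
    (fun g => (isClopen_mem _).isOpen) (by
      intro K hK
      rw [Set.mem_iUnion]
      by_contra! hno
      apply hbot
      have : K = ⊥ := by
        rw [Subgroup.eq_bot_iff_forall]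
        intro k hk
        by_contra hk1
        exact hno ⟨k, hk1⟩ hk
      exact this ▸ hK)
  let F : Finset G := T.image Subtype.val
  have hF1 : (1 : G) ∉ F := by simp [F]
  have hFX : ∀ K ∈ X, ∃ s ∈ F, s ∈ K := by
    intro K hK
    have := hT hK
    simp only [Set.mem_iUnion] at this
    obtain ⟨g, hg, hgK⟩ := this
    exact ⟨g, Finset.mem_image_of_mem _ hg, hgK⟩
  obtain ⟨ρ, hρ, hρ1, hρ2, -⟩ := amen_state (hXa H hH)
  obtain ⟨L, hL, hLm⟩ := exists_isMinL _ hρ.mulOp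
  obtain ⟨x, hx⟩ := hL.compact.extremePoints_nonempty hL.nonempty
  obtain ⟨m, hm, hxm⟩ := hLm x hx.1
  have hρ' : IsState (1 : Op G) ((OMod G G).conv m ρ) := GMod.conv_isState (α := OMod G G) hm hρ
  have hx' : (OMod G G).conv m ρ ∘ mulOp = x := by
    rw [hxm, ← GMod.conv_comp (α := OMod G G) (β := LMod G G)]
    intro g w
    rw [OMod_act, perm_mulOp]
  obtain ⟨g, hg⟩ := free_of_simple hs hL hx F hF1
  set ρ'' := (OMod G G).sh g ((OMod G G).conv m ρ) with hρdef
  have hρ'' : IsState (1 : Op G) ρ'' := GMod.sh_isState (α := OMod G G) hρ' g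
  have hx'' : ρ'' ∘ mulOp = (LMod G G).sh g x := by
    rw [← hx', ← GMod.sh_comp (α := OMod G G) (β := LMod G G)]
    intro g w
    rw [OMod_act, perm_mulOp]
  let S : Op G := ∑ s ∈ F, (1 : ℂ) • perm s
  have h0 : ρ'' S = 0 := by
    rw [hρ''.sum]
    exact Finset.sum_eq_zero fun s hsF =>
      hL.kill (hL.sh_ext hx g) hρ'' hx'' s (hg s hsF) 1
  have h1 : 1 ≤ ρ'' S := by
    change 1 ≤ m (toB fun k => ρ ((OMod G G).act k⁻¹ ((OMod G G).act g⁻¹ S)))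
    rw [← hm.one]
    refine hm.mono _ _ fun k => ?_
    rw [GMod.conv_toB (α := OMod G G) hρ, ← GMod.act_mul, map_sum, hρ.sum]
    obtain ⟨s, hsF, hsK⟩ := hFX _ (hinv (g * k) H hH)
    rw [mem_conjSub] at hsK
    have hterm : ∀ s ∈ F, 0 ≤ ρ ((OMod G G).act (k⁻¹ * g⁻¹) ((1 : ℂ) • perm s)) := by
      intro s _
      rw [OMod_perm]
      by_cases h : k⁻¹ * g⁻¹ * s * (k⁻¹ * g⁻¹)⁻¹ ∈ H
      · rw [hρ1 _ h]; simp
      · rw [hρ2 _ h]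
    refine le_trans ?_ (Finset.single_le_sum hterm hsF)
    rw [OMod_perm, hρ1 _ (by
      have e : k⁻¹ * g⁻¹ * s * (k⁻¹ * g⁻¹)⁻¹ = (g * k)⁻¹ * s * (g * k) := by group
      rw [e]; exact hsK)]
    exact le_refl (1 : ℝ)
  linarith

/-- **Theorem (Kennedy).** A discrete group is C*-simple if and only if it has no non-trivial
amenable uniformly recurrent subgroup. -/
theorem cstarSimple_iff_no_nontrivial_amenable_urs (G : Type u) [Group G] :
    IsCstarSimple G ↔
      ¬ ∃ X : Set (Subgroup G), IsURS G X ∧ (∀ H ∈ X, IsAmenable H) ∧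
        X ≠ {(⊥ : Subgroup G)} := by
  constructor
  · rintro hs ⟨X, hX, hXa, hne⟩
    exact hne (no_urs_of_simple hs X hX hXa)
  · intro hno
    exact simple_of_free fun x hx F hF => free_of_no_urs hno hx F hF
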